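/- Let k be a perfect field and let A and B be two complete Noetherian local commutative rings containing k, with maximal ideals m and n respectively, such that A⊗̂_k B is Noetherian. Assume A and B are integrally closed domains. Then A⊗̂_k B is a domain if and only if the prime spectrum of (A/m)⊗_k(B/n) is connected, equivalently (A/m)⊗_k(B/n) has no idempotents other than 0 and 1. -/

import Mathlib

open TensorProduct

/-- The ideal `r = m ⊗ B + A ⊗ n` of `C = A ⊗[k] B`, where `m` and `n` are the Jacobson
radicals of `A` and `B` (for a local ring, the Jacobson radical is the maximal ideal). -/
noncomputable def tensorRadical (k A B : Type*) [Field k] [CommRing A] [CommRing B]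
    [Algebra k A] [Algebra k B] : Ideal (A ⊗[k] B) :=
  Ideal.map (Algebra.TensorProduct.includeLeft (R := k) (S := k) (A := A) (B := B))
      ((⊥ : Ideal A).jacobson) ⊔
    Ideal.map (Algebra.TensorProduct.includeRight (R := k) (A := A) (B := B))
      ((⊥ : Ideal B).jacobson)

/-- The completed tensor product `A ⊗̂[k] B`: the `r`-adic separated completion of
`C = A ⊗[k] B`, i.e. the inverse limit of the rings `C ⧸ r ^ i`. -/
noncomputable abbrev CompletedTensor (k A B : Type*) [Field k] [CommRing A] [CommRing B]
    [Algebra k A] [Algebra k B] : Type _ :=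
  AdicCompletion (tensorRadical k A B) (A ⊗[k] B)

/-!
Let `k₁` and `k₂` be the algebraic closures of `k` in `A` and `B`. They embed into the residue
fields, so if the spectrum of `(A ⧸ m) ⊗[k] (B ⧸ n)` is connected, then so is that of `k₁ ⊗[k] k₂`;
being reduced and integral over `k`, this ring is then a field, and it embeds into an algebraic
closure `Ω` of `k`. By Galois descent of a minimal prime, the completed base changes of `A` from
`k₁` to `Ω` and of `B` from `k₂` to `Ω` are complete Noetherian local domains. Over the
algebraically closed field `Ω` the completed tensor product of two such domains is a domain: if
the product of two nonzero elements vanished, specialising one factor after the other along an arc,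
a map to a discrete valuation ring, would produce a vanishing product of leading coefficients in
`Ω`. The zero divisors of `A ⊗̂[k] B` are controlled by this ring, because
`A ⊗[k] B → (Ω ⊗[k₁] A) ⊗[Ω] (Ω ⊗[k₂] B)` is injective and compatible with the filtrations.

Conversely, `A ⊗̂[k] B` is complete along the kernel of its map to `(A ⧸ m) ⊗[k] (B ⧸ n)`, so
idempotents lift by Hensel's lemma, and a domain has only the trivial ones.
-/

universe u

section Filtrations

variable {C D : Type*} [CommRing C] [CommRing D] {F : ℕ → Ideal C} {f g : ℕ → C}

/-- The terms of `f` represent an element of the inverse limit of the rings `C ⧸ F n`. -/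
def IsCauchyAlong (F : ℕ → Ideal C) (f : ℕ → C) : Prop :=
  ∀ n, f (n + 1) - f n ∈ F n

/-- `f` represents the zero element of the inverse limit of the rings `C ⧸ F n`. -/
def IsNullAlong (F : ℕ → Ideal C) (f : ℕ → C) : Prop :=
  ∀ n, f n ∈ F n

/-- The inverse limit of the rings `C ⧸ F n` has no zero divisors. Working with Cauchy sequences
of representatives avoids comparing inverse limits along different filtrations. -/
def NoZeroDivisorsAlong (F : ℕ → Ideal C) : Prop :=
  ∀ f g, IsCauchyAlong F f → IsCauchyAlong F g → IsNullAlong F (f * g) →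
    IsNullAlong F f ∨ IsNullAlong F g

lemma IsCauchyAlong.sub_mem_of_le (hF : Antitone F) (hf : IsCauchyAlong F f) {m n : ℕ} (h : m ≤ n) :
    f n - f m ∈ F m := by
  induction n, h using Nat.le_induction with
  | base => simp
  | succ n hmn ih => simpa using add_mem (hF hmn (hf n)) ih

lemma NoZeroDivisorsAlong.comap {F : ℕ → Ideal D} (hF : NoZeroDivisorsAlong F) (ψ : C →+* D) :
    NoZeroDivisorsAlong fun n ↦ (F n).comap ψ := by
  intro f g hf hg hfg
  refine hF (ψ ∘ f) (ψ ∘ g) (fun n ↦ ?_) (fun n ↦ ?_) fun n ↦ ?_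
  · simpa using hf n
  · simpa using hg n
  · simpa using hfg n

lemma noZeroDivisorsAlong_const_bot [NoZeroDivisors C] :
    NoZeroDivisorsAlong fun _ ↦ (⊥ : Ideal C) := by
  intro f g hf hg hfg
  have hconst {f : ℕ → C} (hf : IsCauchyAlong (fun _ ↦ (⊥ : Ideal C)) f) (n : ℕ) : f n = f 0 :=
    sub_eq_zero.1 (hf.sub_mem_of_le antitone_const n.zero_le)
  rcases mul_eq_zero.1 (hfg 0) with h | h
  · exact .inl fun n ↦ (hconst hf n).trans h
  · exact .inr fun n ↦ (hconst hg n).trans h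

end Filtrations

section LeadingCoefficients

variable {C : Type*} [CommRing C] {P : ℕ → Ideal C} {t : C}

lemma mem_sup_span_singleton_iff {I : Ideal C} {s z : C} :
    z ∈ I ⊔ Ideal.span {s} ↔ ∃ c, z - s * c ∈ I := by
  refine ⟨fun h ↦ ?_, fun ⟨c, hc⟩ ↦ ?_⟩
  · obtain ⟨y, hy, w, hw, rfl⟩ := Submodule.mem_sup.1 h
    obtain ⟨c, rfl⟩ := Ideal.mem_span_singleton.1 hw
    exact ⟨c, by simpa using hy⟩
  · simpa using add_mem (Ideal.mem_sup_left hc)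
      (Ideal.mem_sup_right (Ideal.mul_mem_right c _ (Ideal.mem_span_singleton_self s)))

lemma sup_span_pow_le (hP : Antitone P) (t : C) {m n k l : ℕ} (hmn : m ≤ n) (hkl : k ≤ l) :
    P n ⊔ Ideal.span {t ^ l} ≤ P m ⊔ Ideal.span {t ^ k} :=
  sup_le_sup (hP hmn) (Ideal.span_singleton_le_span_singleton.2 (pow_dvd_pow t hkl))

lemma mem_of_pow_mul_mem {I : Ideal C} (hI : ∀ z, t * z ∈ I → z ∈ I) {z : C} :
    ∀ a, t ^ a * z ∈ I → z ∈ I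
  | 0, h => by simpa using h
  | a + 1, h => mem_of_pow_mul_mem hI a (hI _ (by rwa [← mul_assoc, ← pow_succ']))

lemma mem_sup_span_pow_of_pow_mul_mem {I : Ideal C} (hI : ∀ z, t * z ∈ I → z ∈ I) {a m : ℕ} {z : C}
    (h : t ^ a * z ∈ I ⊔ Ideal.span {t ^ (a + m)}) : z ∈ I ⊔ Ideal.span {t ^ m} := by
  obtain ⟨c, hc⟩ := mem_sup_span_singleton_iff.1 h
  refine mem_sup_span_singleton_iff.2 ⟨c, mem_of_pow_mul_mem hI a ?_⟩
  rwa [mul_sub, ← mul_assoc, ← pow_add]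

/-- `t ^ a` is the exact power of `t` dividing `f`, and `p` is the sequence of quotients. -/
lemma exists_leadingCoeff (hP : Antitone P) (ht : ∀ n z, t * z ∈ P n → z ∈ P n) {f : ℕ → C}
    (hf : IsCauchyAlong (fun n ↦ P n ⊔ Ideal.span {t ^ n}) f)
    (hf0 : ¬ IsNullAlong (fun n ↦ P n ⊔ Ideal.span {t ^ n}) f) :
    ∃ a, ∀ N > a, ∃ p, IsCauchyAlong (fun n ↦ P n ⊔ Ideal.span {t}) p ∧
      ¬ IsNullAlong (fun n ↦ P n ⊔ Ideal.span {t}) p ∧ ∀ n, f (n + N) - t ^ a * p n ∈ P n := by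
  let Q (a : ℕ) : Prop := ∀ m ≥ a, f m ∈ P m ⊔ Ideal.span {t ^ a}
  obtain ⟨a, ha, ha'⟩ : ∃ a, Q a ∧ ¬ Q (a + 1) := by
    by_contra! h
    exact hf0 fun n ↦ Nat.rec (motive := Q) (fun m _ ↦ by simp) h n n le_rfl
  obtain ⟨m₀, hm₀, hfm₀⟩ : ∃ m ≥ a + 1, f m ∉ P m ⊔ Ideal.span {t ^ (a + 1)} := by
    simpa [Q] using ha'
  refine ⟨a, fun N hN ↦ ?_⟩
  choose p hp using fun n ↦ mem_sup_span_singleton_iff.1 (ha (n + N) (by lia))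
  refine ⟨p, fun n ↦ ?_, fun hnull ↦ hfm₀ ?_, fun n ↦ hP (n.le_add_right N) (hp n)⟩
  · rw [← pow_one t]
    refine mem_sup_span_pow_of_pow_mul_mem (ht n) (a := a) ?_
    have hdiff : t ^ a * (p (n + 1) - p n) = f (n + 1 + N) - f (n + N)
        - (f (n + 1 + N) - t ^ a * p (n + 1)) + (f (n + N) - t ^ a * p n) := by ring
    have hfn : f (n + 1 + N) - f (n + N) ∈ P n ⊔ Ideal.span {t ^ (a + 1)} :=
      sup_span_pow_le hP t (l := n + N) (n.le_add_right N) (by lia)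
        (by simpa only [add_right_comm] using hf (n + N))
    rw [hdiff]
    exact add_mem (sub_mem hfn (Ideal.mem_sup_left (hP (by lia) (hp (n + 1)))))
      (Ideal.mem_sup_left (hP (by lia) (hp n)))
  · obtain ⟨c, hc⟩ := mem_sup_span_singleton_iff.1 (hnull m₀)
    have hlate : f (m₀ + N) ∈ P m₀ ⊔ Ideal.span {t ^ (a + 1)} := by
      refine mem_sup_span_singleton_iff.2 ⟨c, ?_⟩
      have : f (m₀ + N) - t ^ (a + 1) * c =
        (f (m₀ + N) - t ^ a * p m₀) + t ^ a * (p m₀ - t * c) := by ring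
      rw [this]
      exact add_mem (hP (m₀.le_add_right N) (hp m₀)) (Ideal.mul_mem_left _ _ hc)
    have hsub : f (m₀ + N) - f m₀ ∈ P m₀ ⊔ Ideal.span {t ^ (a + 1)} :=
      sup_span_pow_le hP t le_rfl hm₀ (hf.sub_mem_of_le
        (fun _ _ h ↦ sup_span_pow_le hP t h h) (m₀.le_add_right N))
    simpa using sub_mem hlate hsub

/-- The leading coefficient of a product is the product of the leading coefficients. -/
theorem NoZeroDivisorsAlong.of_leadingCoeff (hP : Antitone P)
    (ht : ∀ n z, t * z ∈ P n → z ∈ P n)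
    (h : NoZeroDivisorsAlong fun n ↦ P n ⊔ Ideal.span {t}) :
    NoZeroDivisorsAlong fun n ↦ P n ⊔ Ideal.span {t ^ n} := by
  intro f g hf hg hfg
  by_contra! hcon
  obtain ⟨a, ha⟩ := exists_leadingCoeff hP ht hf hcon.1
  obtain ⟨b, hb⟩ := exists_leadingCoeff hP ht hg hcon.2
  obtain ⟨p, hp, hp0, hfp⟩ := ha (a + b + 1) (by lia)
  obtain ⟨q, hq, hq0, hgq⟩ := hb (a + b + 1) (by lia)
  refine (h p q hp hq fun n ↦ ?_).elim hp0 hq0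
  rw [← pow_one t]
  refine mem_sup_span_pow_of_pow_mul_mem (ht n) (a := a + b) ?_
  have hprod : t ^ (a + b) * (p n * q n) = f (n + (a + b + 1)) * g (n + (a + b + 1))
      - (f (n + (a + b + 1)) - t ^ a * p n) * g (n + (a + b + 1))
      - (g (n + (a + b + 1)) - t ^ b * q n) * (t ^ a * p n) := by ring
  have hfgn := sup_span_pow_le hP t (n.le_add_right (a + b + 1))
    (Nat.le_add_left (a + b + 1) n) (hfg (n + (a + b + 1)))
  simp only [Pi.mul_apply, hprod]
  exact sub_mem (sub_mem hfgn (Ideal.mem_sup_left (Ideal.mul_mem_right _ _ (hfp n))))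
    (Ideal.mem_sup_left (Ideal.mul_mem_right _ _ (hgq n)))

end LeadingCoefficients

section TensorIdeals

/-- Working over the larger field `k₁` on the left is what makes it possible to test elements of
`X ⊗[k] Y` on `k₁ ⊗[k] k₂`. -/
lemma exists_rTensor_ne_zero (k k₁ : Type*) {X Y : Type*} [Field k] [Field k₁] [Algebra k k₁]
    [AddCommGroup X] [Module k X] [Module k₁ X] [IsScalarTower k k₁ X]
    [AddCommGroup Y] [Module k Y] {z : X ⊗[k] Y} (hz : z ≠ 0) :
    ∃ φ : X →ₗ[k₁] k₁, LinearMap.rTensor Y (φ.restrictScalars k) z ≠ 0 := by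
  classical
  by_contra! h
  let b := Module.Basis.ofVectorSpace k₁ X
  let e := (TensorProduct.congr (b.repr.restrictScalars k) (LinearEquiv.refl k Y)).trans
    (TensorProduct.finsuppLeft k k k₁ Y _)
  have he (w : X ⊗[k] Y) (i) :
      e w i = LinearMap.rTensor Y ((b.coord i).restrictScalars k) w := by
    induction w with
    | zero => simp
    | add x y hx hy => simp only [map_add, Finsupp.add_apply, hx, hy]
    | tmul x y => simp [e, TensorProduct.finsuppLeft_apply_tmul_apply]
  exact hz (e.injective (by ext i; simp [he, h]))

variable {k S R : Type*} [Field k] [CommRing S] [CommRing R] [Algebra k S] [Algebra k R]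

/-- The ideal `I ⊗ R + S ⊗ K` of `S ⊗[k] R`. -/
noncomputable def tensorIdeal (k : Type*) {S R : Type*} [Field k] [CommRing S] [CommRing R]
    [Algebra k S] [Algebra k R] (I : Ideal S) (K : Ideal R) : Ideal (S ⊗[k] R) :=
  I.map (Algebra.TensorProduct.includeLeft : S →ₐ[k] S ⊗[k] R) ⊔
    K.map (Algebra.TensorProduct.includeRight : R →ₐ[k] S ⊗[k] R)

/-- The slice map `φ ⊗ id`, which evaluates the left tensor factor by the functional `φ`. -/
noncomputable def tensorSlice (R : Type*) [CommRing R] [Algebra k R] (φ : S →ₗ[k] k) :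
    S ⊗[k] R →ₗ[k] R :=
  (TensorProduct.lid k R).toLinearMap ∘ₗ LinearMap.rTensor R φ

@[simp] lemma tensorSlice_tmul (φ : S →ₗ[k] k) (s : S) (r : R) :
    tensorSlice R φ (s ⊗ₜ r) = φ s • r := by
  simp [tensorSlice]

lemma tensorSlice_mul_tmul (φ : S →ₗ[k] k) (z : S ⊗[k] R) (r : R) :
    tensorSlice R φ (z * 1 ⊗ₜ r) = tensorSlice R φ z * r := by
  induction z with
  | zero => simp
  | add x y hx hy => simp only [map_add, add_mul, hx, hy]
  | tmul x y => simp

lemma tensorSlice_map {S' R' : Type*} [CommRing S'] [Algebra k S'] [CommRing R'] [Algebra k R']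
    (g : S →ₐ[k] S') (h : R →ₐ[k] R') (φ : S' →ₗ[k] k) (z : S ⊗[k] R) :
    tensorSlice R' φ (Algebra.TensorProduct.map g h z) =
      h (tensorSlice R (φ ∘ₗ g.toLinearMap) z) := by
  induction z with
  | zero => simp
  | add x y hx hy => simp only [map_add, hx, hy]
  | tmul x y => simp

lemma tensorIdeal_eq_ker (I : Ideal S) (K : Ideal R) :
    tensorIdeal k I K = RingHom.ker (Algebra.TensorProduct.map (Ideal.Quotient.mkₐ k I)
      (Ideal.Quotient.mkₐ k K)) := by
  have hI : RingHom.ker (Ideal.Quotient.mkₐ k I) = I := Ideal.Quotient.mkₐ_ker k I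
  have hK : RingHom.ker (Ideal.Quotient.mkₐ k K) = K := Ideal.Quotient.mkₐ_ker k K
  rw [Algebra.TensorProduct.map_ker _ _ (Ideal.Quotient.mkₐ_surjective k I)
    (Ideal.Quotient.mkₐ_surjective k K), hI, hK, tensorIdeal]

lemma mem_tensorIdeal_iff {I : Ideal S} {K : Ideal R} {z : S ⊗[k] R} :
    z ∈ tensorIdeal k I K ↔ ∀ φ : S →ₗ[k] k, (∀ x ∈ I, φ x = 0) → tensorSlice R φ z ∈ K := by
  rw [tensorIdeal_eq_ker, RingHom.mem_ker]
  refine ⟨fun hz φ hφ ↦ ?_, fun h ↦ ?_⟩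
  · let φ' : (S ⧸ I) →ₗ[k] k := (I.restrictScalars k).liftQ φ hφ ∘ₗ
      (Submodule.Quotient.restrictScalarsEquiv k I).symm.toLinearMap
    have hφ' : φ = φ' ∘ₗ (Ideal.Quotient.mkₐ k I).toLinearMap := rfl
    rw [hφ', ← Ideal.Quotient.eq_zero_iff_mem, ← Ideal.Quotient.mkₐ_eq_mk k, ← tensorSlice_map, hz,
      map_zero]
  · by_contra hne
    obtain ⟨φ, hφ⟩ := exists_rTensor_ne_zero k k hne
    have hslice := h (φ ∘ₗ (Ideal.Quotient.mkₐ k I).toLinearMap)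
      fun x hx ↦ by simp [Ideal.Quotient.eq_zero_iff_mem.2 hx]
    rw [← Ideal.Quotient.eq_zero_iff_mem, ← Ideal.Quotient.mkₐ_eq_mk k, ← tensorSlice_map] at hslice
    exact hφ ((TensorProduct.lid k _).injective (hslice.trans (map_zero _).symm))

lemma tensorIdeal_mono {I I' : Ideal S} {K K' : Ideal R} (h : I ≤ I') (h' : K ≤ K') :
    tensorIdeal k I K ≤ tensorIdeal k I' K' :=
  sup_le_sup (Ideal.map_mono h) (Ideal.map_mono h')

lemma mem_tensorIdeal_of_mul_mem {I : Ideal S} {K : Ideal R} {t : R}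
    (ht : ∀ r, t * r ∈ K → r ∈ K) {z : S ⊗[k] R} (hz : 1 ⊗ₜ t * z ∈ tensorIdeal k I K) :
    z ∈ tensorIdeal k I K := by
  rw [mem_tensorIdeal_iff] at hz ⊢
  refine fun φ hφ ↦ ht _ ?_
  rw [mul_comm t, ← tensorSlice_mul_tmul, mul_comm z]
  exact hz φ hφ

lemma tensorIdeal_span_pow (I : Ideal S) (t : R) (n : ℕ) :
    tensorIdeal k I (Ideal.span {t ^ n}) =
      tensorIdeal k I ⊥ ⊔ Ideal.span {((1 : S) ⊗ₜ[k] t) ^ n} := by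
  simp [tensorIdeal, Ideal.map_span, Algebra.TensorProduct.tmul_pow]

lemma comap_map_tensorIdeal {S' R' : Type*} [CommRing S'] [Algebra k S'] [CommRing R']
    [Algebra k R'] (g : S →ₐ[k] S') (h : R →ₐ[k] R') (I : Ideal S') (K : Ideal R') :
    (tensorIdeal k I K).comap (Algebra.TensorProduct.map g h) =
      tensorIdeal k (I.comap g) (K.comap h) := by
  let g' : (S ⧸ I.comap g) →ₐ[k] S' ⧸ I := Ideal.quotientMapₐ I g le_rfl
  let h' : (R ⧸ K.comap h) →ₐ[k] R' ⧸ K := Ideal.quotientMapₐ K h le_rfl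
  have hinj : Function.Injective (Algebra.TensorProduct.map g' h') :=
    TensorProduct.map_injective_of_flat_flat g'.toLinearMap h'.toLinearMap
      (Ideal.quotientMap_injective (f := g.toRingHom))
      (Ideal.quotientMap_injective (f := h.toRingHom))
  have hcomm : (Algebra.TensorProduct.map (Ideal.Quotient.mkₐ k I) (Ideal.Quotient.mkₐ k K)).comp
      (Algebra.TensorProduct.map g h) = (Algebra.TensorProduct.map g' h').comp
        (Algebra.TensorProduct.map (Ideal.Quotient.mkₐ k _) (Ideal.Quotient.mkₐ k _)) := by
    ext <;> rfl
  ext z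
  rw [tensorIdeal_eq_ker, tensorIdeal_eq_ker, Ideal.mem_comap, RingHom.mem_ker, RingHom.mem_ker]
  rw [← hinj.eq_iff, map_zero, ← AlgHom.comp_apply, ← AlgHom.comp_apply, hcomm]

lemma tensorIdeal_le_comap_comm (I : Ideal S) (K : Ideal R) :
    tensorIdeal k I K ≤ (tensorIdeal k K I).comap (Algebra.TensorProduct.comm k S R) :=
  sup_le (Ideal.map_le_iff_le_comap.2 fun _ hx ↦ Ideal.mem_sup_right (Ideal.mem_map_of_mem _ hx))
    (Ideal.map_le_iff_le_comap.2 fun _ hx ↦ Ideal.mem_sup_left (Ideal.mem_map_of_mem _ hx))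

lemma comap_comm_tensorIdeal (I : Ideal S) (K : Ideal R) :
    (tensorIdeal k K I).comap (Algebra.TensorProduct.comm k S R) = tensorIdeal k I K := by
  refine le_antisymm (fun z hz ↦ ?_) (tensorIdeal_le_comap_comm I K)
  have hz' := tensorIdeal_le_comap_comm K I (Ideal.mem_comap.1 hz)
  rwa [Ideal.mem_comap, ← Algebra.TensorProduct.comm_symm, AlgEquiv.symm_apply_apply] at hz'

end TensorIdeals

section KrullAkizuki

variable {D : Type*} [CommRing D] [IsNoetherianRing D] [Ring.DimensionLEOne D]

lemma isArtinianRing_quotient_span {c : D} (hc : c ≠ 0) :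
    IsArtinianRing (D ⧸ Ideal.span {c}) := by
  have : Ring.KrullDimLE 0 (D ⧸ Ideal.span {c}) := .mk₀ fun p hp ↦ by
    refine Ideal.isMaximal_of_isIntegral_of_isMaximal_comap _ (Ideal.IsPrime.isMaximal
      (hp.comap (Ideal.Quotient.mk (Ideal.span {c}))) fun hbot ↦ hc ?_)
    rw [← Ideal.mem_bot, ← hbot, Ideal.mem_comap, Ideal.Quotient.algebraMap_eq,
      Ideal.Quotient.mk_singleton_self]
    exact p.zero_mem
  exact IsNoetherianRing.isArtinianRing_of_krullDimLE_zero

lemma exists_pow_eq_pow_succ_mul_add (c : D) {e : D} (he : e ≠ 0) :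
    ∃ m u v, c ^ m = c ^ (m + 1) * u + e * v := by
  have := isArtinianRing_quotient_span he
  obtain ⟨m, u, hu⟩ := IsArtinian.exists_pow_succ_smul_dvd
    (Ideal.Quotient.mk (Ideal.span {e}) c) (1 : D ⧸ Ideal.span {e})
  obtain ⟨u, rfl⟩ := Ideal.Quotient.mk_surjective u
  have hmem : c ^ m - c ^ (m + 1) * u ∈ Ideal.span {e} := by
    rw [← Ideal.Quotient.mk_eq_mk_iff_sub_mem]
    simpa using hu.symm
  obtain ⟨v, hv⟩ := Ideal.mem_span_singleton'.1 hmem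
  exact ⟨m, u, v, by linear_combination -hv⟩

variable {T : Type*} [CommRing T] [IsDomain T] [Algebra D T]

lemma exists_pow_mul_eq_pow_succ_mul_add [FaithfulSMul D T]
    (hT : ∀ x : T, ∃ e b : D, e ≠ 0 ∧ algebraMap D T e * x = algebraMap D T b) {c : D}
    (hc : c ≠ 0) :
    ∃ n, ∀ x : T, ∃ (y : T) (d : D),
      algebraMap D T c ^ n * x = algebraMap D T c ^ (n + 1) * y + algebraMap D T d := by
  have := isArtinianRing_quotient_span hc
  set γ := algebraMap D T c with hγ
  have hγ0 : γ ≠ 0 := by simpa [hγ] using hc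
  let I (j : ℕ) : Ideal (D ⧸ Ideal.span {c}) :=
    ((Ideal.span {γ ^ j}).comap (algebraMap D T)).map (Ideal.Quotient.mk _)
  obtain ⟨n, hn⟩ : ∃ n, ∀ j, n ≤ j → I n = I j :=
    IsArtinian.monotone_stabilizes ⟨I, fun _ _ h ↦ Ideal.map_mono (Ideal.comap_mono
      (Ideal.span_singleton_le_span_singleton.2 (pow_dvd_pow γ h)))⟩
  refine ⟨n, fun x ↦ ?_⟩
  obtain ⟨e, b, he, hb⟩ := hT x
  obtain ⟨m, u, v, hm⟩ := exists_pow_eq_pow_succ_mul_add c he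
  have hdescend (j : ℕ) : (∃ y d, γ ^ (n + j) * x = γ ^ (n + j + 1) * y + algebraMap D T d) →
      ∃ y d, γ ^ n * x = γ ^ (n + 1) * y + algebraMap D T d := by
    induction j with
    | zero => exact id
    | succ j ih =>
      rintro ⟨y, d, hyd⟩
      have hd : Ideal.Quotient.mk (Ideal.span {c}) d ∈ I (n + j + 2) := by
        rw [← hn _ (by lia : n ≤ n + j + 2), hn _ (by lia : n ≤ n + j + 1)]
        refine Ideal.mem_map_of_mem _ (Ideal.mem_span_singleton'.2 ⟨x - γ * y, ?_⟩)
        linear_combination hyd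
      obtain ⟨d', hd', hdd'⟩ :=
        (Ideal.mem_map_iff_of_surjective _ Ideal.Quotient.mk_surjective).1 hd
      obtain ⟨z, hz⟩ := Ideal.mem_span_singleton'.1 hd'
      obtain ⟨r, hr⟩ := Ideal.mem_span_singleton'.1 (Ideal.Quotient.eq.1 hdd'.symm)
      replace hr := congr(algebraMap D T $hr)
      simp only [map_mul, map_sub, ← hγ] at hr
      refine ih ⟨y + z, r, mul_left_cancel₀ hγ0 ?_⟩
      linear_combination hyd - hr - hz
  refine hdescend m ⟨algebraMap D T u * x, c ^ n * (v * b), ?_⟩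
  replace hm := congr(algebraMap D T $hm)
  simp only [map_add, map_mul, map_pow, ← hγ] at hm ⊢
  linear_combination γ ^ n * x * hm + γ ^ n * algebraMap D T v * hb

/-- The Krull–Akizuki theorem. For `0 ≠ c ∈ D` some `c ^ n • T` lies in `c ^ (n + 1) • T + D`, which
reduces the finite generation of an ideal of `T` containing `c` to that of an ideal of `D`. -/
theorem isNoetherianRing_of_dimensionLEOne [FaithfulSMul D T]
    (hT : ∀ x : T, ∃ e b : D, e ≠ 0 ∧ algebraMap D T e * x = algebraMap D T b) :
    IsNoetherianRing T := by
  rw [isNoetherianRing_iff_ideal_fg]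
  intro J
  by_cases hJ : J = ⊥
  · exact hJ ▸ Submodule.fg_bot
  obtain ⟨x, hxJ, hx0⟩ := Submodule.exists_mem_ne_zero_of_ne_bot hJ
  obtain ⟨e, c, he, hec⟩ := hT x
  have hc : c ≠ 0 := by
    rintro rfl
    simp_all
  obtain ⟨n, hn⟩ := exists_pow_mul_eq_pow_succ_mul_add hT hc
  set γ := algebraMap D T c with hγ
  have hγ0 : γ ≠ 0 := by simpa [hγ] using hc
  have hγJ : γ ∈ J := hec ▸ J.mul_mem_left _ hxJ
  let M : Submodule D T := J.restrictScalars D ⊓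
    (LinearMap.range (Algebra.linearMap D T)).comap (LinearMap.mulLeft D (γ ^ n))
  have : IsNoetherian D M := by
    let ι : M →ₗ[D] LinearMap.range (Algebra.linearMap D T) :=
      (LinearMap.mulLeft D (γ ^ n)).restrict fun _ h ↦ h.2
    refine isNoetherian_of_injective ι fun a b hab ↦ Subtype.ext ?_
    exact mul_left_cancel₀ (pow_ne_zero n hγ0) congr(($hab : T))
  have hMJ : J = Ideal.span {γ} ⊔ Submodule.span T (M : Set T) := by
    refine le_antisymm (fun x hx ↦ ?_) (sup_le ((Ideal.span_singleton_le_iff_mem J).2 hγJ)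
      (Submodule.span_le.2 fun _ h ↦ h.1))
    obtain ⟨y, d, hyd⟩ := hn x
    have hM : x - γ * y ∈ M := ⟨sub_mem hx (J.mul_mem_right _ hγJ), d, by
      simp only [Algebra.linearMap_apply, LinearMap.mulLeft_apply]
      linear_combination -hyd⟩
    exact Submodule.mem_sup.2
      ⟨γ * y, Ideal.mul_mem_right _ _ (Ideal.mem_span_singleton_self γ), _,
        Submodule.subset_span hM, by ring⟩
  obtain ⟨s, hs⟩ : M.FG := Module.Finite.iff_fg.1 inferInstance
  rw [hMJ, ← hs, Submodule.span_span_of_tower]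
  exact (Submodule.fg_span_singleton γ).sup (Submodule.fg_span s.finite_toSet)

end KrullAkizuki

section DimensionOne

variable {D : Type*} [CommRing D] [IsDomain D] [IsNoetherianRing D]

/-- Otherwise prime avoidance would give an element of `p` whose height-one minimal primes
contain `d`. -/
lemma mem_minimalPrimes_span_of_forall_mem {d : D} (hd : d ≠ 0)
    (h : ∀ p : Ideal D, p.IsPrime → p ≠ ⊥ → d ∈ p) {p : Ideal D} (hp : p.IsPrime) (hp0 : p ≠ ⊥) :
    p ∈ (Ideal.span {d}).minimalPrimes := by
  have hmem {q : Ideal D} (hq : q.IsPrime) (hq0 : q ≠ ⊥) : Ideal.span {d} ≤ q :=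
    (Ideal.span_singleton_le_iff_mem q).2 (h q hq hq0)
  have hcover : (p : Set D) ⊆ ⋃ q ∈ (Ideal.span {d}).minimalPrimes, (q : Set D) := by
    intro x hx
    by_cases hx0 : x = 0
    · obtain ⟨q, hq, -⟩ := Ideal.exists_minimalPrimes_le (hmem hp hp0)
      exact Set.mem_biUnion hq (hx0 ▸ q.zero_mem)
    obtain ⟨q, hq, -⟩ := Ideal.exists_minimalPrimes_le ((Ideal.span_singleton_le_iff_mem p).2 hx)
    have hqp := hq.isPrime
    have hxq : x ∈ q := (Ideal.span_singleton_le_iff_mem q).1 hq.1.2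
    have hq0 : q ≠ ⊥ := fun hq0 ↦ hx0 (by simpa [hq0] using hxq)
    refine Set.mem_biUnion (Ideal.mem_minimalPrimes_of_height_le (hmem hqp hq0) ?_) hxq
    exact (Ideal.height_le_one_of_isPrincipal_of_mem_minimalPrimes _ q hq).trans
      (Ideal.one_le_height_span_singleton_of_mem_nonZeroDivisors (by simpa using hd))
  obtain ⟨q, hq, hpq⟩ := (p.subset_union_prime_finite (f := id)
    (Ideal.finite_minimalPrimes_of_isNoetherianRing D _) ⊥ ⊥ fun _ h _ _ ↦ h.isPrime).1 hcover
  rwa [le_antisymm hpq (hq.2 ⟨hp, hmem hp hp0⟩ hpq)]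

lemma dimensionLEOne_of_forall_mem {d : D} (hd : d ≠ 0)
    (h : ∀ p : Ideal D, p.IsPrime → p ≠ ⊥ → d ∈ p) : Ring.DimensionLEOne D where
  maximalOfPrime {p} hp0 hp := by
    obtain ⟨m, hm, hpm⟩ := p.exists_le_maximal hp.ne_top
    have hm' := mem_minimalPrimes_span_of_forall_mem hd h hm.isPrime (ne_bot_of_le_ne_bot hp0 hpm)
    have hp' := mem_minimalPrimes_span_of_forall_mem hd h hp hp0
    rwa [le_antisymm hpm (hm'.2 hp'.1 hpm)]

end DimensionOne

section DiscreteValuationRings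

open IsLocalRing

lemma exists_isDiscreteValuationRing_isLocalHom_injective (D : Type u) [CommRing D] [IsDomain D]
    [IsNoetherianRing D] [IsLocalRing D] [Ring.DimensionLEOne D] :
    ∃ (V : Type u) (_ : CommRing V) (_ : IsDomain V) (_ : IsDiscreteValuationRing V) (π : D →+* V),
      IsLocalHom π ∧ Function.Injective π := by
  by_cases hD : IsField D
  · let := hD.toField
    refine ⟨PowerSeries D, inferInstance, inferInstance, inferInstance, PowerSeries.C, ⟨?_⟩,
      PowerSeries.C_injective⟩
    simp
  obtain ⟨V, hV, _⟩ := exists_factor_valuationRing (algebraMap D (FractionRing D))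
  let π : D →+* V := (algebraMap D (FractionRing D)).codRestrict V.toSubring hV
  have hloc : IsLocalHom π := ‹_›
  have hπ : Function.Injective π := fun x y hxy ↦
    IsFractionRing.injective D (FractionRing D) congr(($hxy : FractionRing D))
  let : Algebra D V := π.toAlgebra
  have : FaithfulSMul D V := (faithfulSMul_iff_algebraMap_injective D V).2 hπ
  have : IsNoetherianRing V := isNoetherianRing_of_dimensionLEOne (D := D) fun x ↦ by
    obtain ⟨b, e, he, hx⟩ := IsFractionRing.div_surjective (A := D) (x : FractionRing D)
    have he0 : algebraMap D (FractionRing D) e ≠ 0 := by simpa using nonZeroDivisors.ne_zero he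
    refine ⟨e, b, nonZeroDivisors.ne_zero he, Subtype.ext ?_⟩
    change algebraMap D (FractionRing D) e * x = algebraMap D (FractionRing D) b
    rw [← hx, mul_div_cancel₀ _ he0]
  have hmax : maximalIdeal V ≠ ⊥ := by
    obtain ⟨y, hy, hy0⟩ := Submodule.exists_mem_ne_zero_of_ne_bot
      (isField_iff_maximalIdeal_eq.not.1 hD)
    have hπy : π y ∈ maximalIdeal V := map_nonunit π y hy
    exact fun h ↦ hy0 (hπ (by simpa [h] using hπy))
  have : IsPrincipalIdealRing V := ((IsBezout.TFAE (R := V)).out 0 1 :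
    IsNoetherianRing V ↔ IsPrincipalIdealRing V).1 inferInstance
  exact ⟨V, inferInstance, inferInstance, { not_a_field' := hmax }, π, hloc, hπ⟩

/-- Take `p` maximal among the primes avoiding `d`; then `R ⧸ p` has dimension at most one. -/
theorem exists_isDiscreteValuationRing_isLocalHom_ne_zero {R : Type u} [CommRing R]
    [IsNoetherianRing R] [IsLocalRing R] {d : R} (hd : ¬ IsNilpotent d) :
    ∃ (V : Type u) (_ : CommRing V) (_ : IsDomain V) (_ : IsDiscreteValuationRing V) (π : R →+* V),
      IsLocalHom π ∧ π d ≠ 0 := by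
  obtain ⟨p, ⟨hp, hdp⟩, hmax⟩ := exists_maximal_of_wellFoundedGT
    (fun p : Ideal R ↦ p.IsPrime ∧ d ∉ p) (by simpa [nilpotent_iff_mem_prime] using hd)
  have hd0 : Ideal.Quotient.mk p d ≠ 0 := by rwa [Ne, Ideal.Quotient.eq_zero_iff_mem]
  have : Ring.DimensionLEOne (R ⧸ p) := dimensionLEOne_of_forall_mem hd0 fun q hq hq0 ↦ by
    by_contra hdq
    have hpq : p ≤ q.comap (Ideal.Quotient.mk p) :=
      p.mk_ker.ge.trans (Ideal.comap_mono bot_le)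
    have hqp := Ideal.map_mono (f := Ideal.Quotient.mk p) (hmax ⟨hq.comap _, hdq⟩ hpq)
    rw [Ideal.map_comap_of_surjective _ Ideal.Quotient.mk_surjective,
      Ideal.map_quotient_self] at hqp
    exact hq0 (le_bot_iff.1 hqp)
  have : IsLocalRing (R ⧸ p) := .of_surjective' (Ideal.Quotient.mk p) Ideal.Quotient.mk_surjective
  have : IsLocalHom (Ideal.Quotient.mk p) := .of_surjective _ Ideal.Quotient.mk_surjective
  obtain ⟨V, _, _, _, π, _, hπ⟩ := exists_isDiscreteValuationRing_isLocalHom_injective (R ⧸ p)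
  exact ⟨V, _, ‹_›, ‹_›, π.comp (Ideal.Quotient.mk p), inferInstance,
    by simpa using hπ.ne_iff.2 hd0⟩

end DiscreteValuationRings

section AdicLimits

variable {R : Type*} [CommRing R] {I : Ideal R}

lemma antitone_ideal_pow (I : Ideal R) : Antitone (I ^ · : ℕ → Ideal R) :=
  fun _ _ h ↦ Ideal.pow_le_pow_right h

lemma IsCauchyAlong.exists_sub_mem_pow [IsPrecomplete I R] {f : ℕ → R}
    (hf : IsCauchyAlong (fun n ↦ I ^ n) f) : ∃ L, ∀ n, f n - L ∈ I ^ n := by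
  obtain ⟨L, hL⟩ := IsPrecomplete.prec (I := I) (M := R) inferInstance (f := f) fun {m n} h ↦ by
    rw [SModEq.comm, SModEq.sub_mem]
    simpa using hf.sub_mem_of_le (antitone_ideal_pow I) h
  exact ⟨L, fun n ↦ by simpa [SModEq.sub_mem] using hL n⟩

lemma eq_zero_of_forall_mem_pow [IsHausdorff I R] {x : R} (hx : ∀ n, x ∈ I ^ n) : x = 0 :=
  IsHausdorff.haus ‹_› x fun n ↦ by simpa [SModEq.zero] using hx n

end AdicLimits

section Arcs

variable {k S : Type*} {R : Type u} [Field k] [CommRing S] [Algebra k S] [CommRing R] [Algebra k R]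
  {J : ℕ → Ideal S} {K : ℕ → Ideal R} {f : ℕ → S ⊗[k] R} {φ : S →ₗ[k] k} {a : ℕ}

lemma IsCauchyAlong.slice (hJ : Antitone J) (hK : Antitone K)
    (hf : IsCauchyAlong (fun n ↦ tensorIdeal k (J n) (K n)) f) (hφ : ∀ x ∈ J a, φ x = 0) :
    IsCauchyAlong K fun n ↦ tensorSlice R φ (f (n + a)) := fun n ↦ by
  simp only [add_right_comm n 1 a, ← map_sub]
  exact hK (n.le_add_right a) (mem_tensorIdeal_iff.1 (hf (n + a)) φ
    fun x hx ↦ hφ x (hJ (Nat.le_add_left a n) hx))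

lemma IsNullAlong.slice (hJ : Antitone J) (hK : Antitone K)
    (hf : IsNullAlong (fun n ↦ tensorIdeal k (J n) (K n)) f) (hφ : ∀ x ∈ J a, φ x = 0) :
    IsNullAlong K fun n ↦ tensorSlice R φ (f (n + a)) := fun n ↦
  hK (n.le_add_right a) (mem_tensorIdeal_iff.1 (hf (n + a)) φ
    fun x hx ↦ hφ x (hJ (Nat.le_add_left a n) hx))

lemma antitone_tensorIdeal (hJ : Antitone J) (hK : Antitone K) :
    Antitone fun n ↦ tensorIdeal k (J n) (K n) :=
  fun _ _ h ↦ tensorIdeal_mono (hJ h) (hK h)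

lemma IsCauchyAlong.exists_tensorSlice_limit_ne_zero {I : Ideal R} [IsPrecomplete I R]
    (hJ : Antitone J) (hf : IsCauchyAlong (fun n ↦ tensorIdeal k (J n) (I ^ n)) f)
    (hf0 : ¬ IsNullAlong (fun n ↦ tensorIdeal k (J n) (I ^ n)) f) :
    ∃ (φ : S →ₗ[k] k) (a : ℕ) (L : R), (∀ x ∈ J a, φ x = 0) ∧ L ≠ 0 ∧
      ∀ n, tensorSlice R φ (f (n + a)) - L ∈ I ^ n := by
  have hI := antitone_ideal_pow I
  obtain ⟨a, ha⟩ := not_forall.1 hf0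
  obtain ⟨φ, hφ, hφf⟩ : ∃ φ : S →ₗ[k] k, (∀ x ∈ J a, φ x = 0) ∧ tensorSlice R φ (f a) ∉ I ^ a := by
    simpa [mem_tensorIdeal_iff] using ha
  obtain ⟨L, hL⟩ := (hf.slice hJ hI hφ).exists_sub_mem_pow
  refine ⟨φ, a, L, hφ, ?_, hL⟩
  rintro rfl
  have hfa := hf.sub_mem_of_le (antitone_tensorIdeal hJ hI) (a.le_add_left a)
  have hslice := mem_tensorIdeal_iff.1 hfa φ hφ
  rw [map_sub] at hslice
  exact hφf (by simpa using sub_mem (hL a) hslice)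

lemma noZeroDivisorsAlong_tensorIdeal_of_isDiscreteValuationRing {V : Type u} [CommRing V]
    [IsDomain V] [IsDiscreteValuationRing V] [Algebra k V] (hJ : Antitone J)
    (H : ∀ (κ : Type u) [Field κ] [Algebra k κ],
      NoZeroDivisorsAlong fun n ↦ tensorIdeal k (J n) (⊥ : Ideal κ)) :
    NoZeroDivisorsAlong fun n ↦ tensorIdeal k (J n) (IsLocalRing.maximalIdeal V ^ n) := by
  obtain ⟨t, ht⟩ := IsDiscreteValuationRing.exists_irreducible V
  have hres : (⊥ : Ideal (IsLocalRing.ResidueField V)).comap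
      (IsScalarTower.toAlgHom k V (IsLocalRing.ResidueField V)) = Ideal.span {t} :=
    IsLocalRing.ker_residue.trans ht.maximalIdeal_eq
  have hcomap := (H (IsLocalRing.ResidueField V)).comap (Algebra.TensorProduct.map (AlgHom.id k S)
    (IsScalarTower.toAlgHom k V (IsLocalRing.ResidueField V))).toRingHom
  have hlead := NoZeroDivisorsAlong.of_leadingCoeff (t := (1 : S) ⊗ₜ[k] t)
    (antitone_tensorIdeal (k := k) hJ (antitone_const (c := (⊥ : Ideal V))))
    (fun n z ↦ mem_tensorIdeal_of_mul_mem fun r hr ↦ by simpa [ht.ne_zero] using hr)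
  simp only [← tensorIdeal_span_pow] at hlead
  simp only [ht.maximalIdeal_eq, Ideal.span_singleton_pow]
  refine hlead ?_
  convert hcomap using 2 with n
  change _ = (tensorIdeal k (J n) ⊥).comap (Algebra.TensorProduct.map _ _)
  have hid : (J n).comap (AlgHom.id k S) = J n := rfl
  rw [comap_map_tensorIdeal, hres, hid, ← pow_one ((1 : S) ⊗ₜ[k] t),
    ← tensorIdeal_span_pow, pow_one]

/-- Specialise `R` along an arc on which the product of two nonzero slices does not vanish. -/
theorem noZeroDivisorsAlong_tensorIdeal_of_residueFields [IsDomain R] [IsNoetherianRing R]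
    [IsLocalRing R] [IsPrecomplete (IsLocalRing.maximalIdeal R) R] (hJ : Antitone J)
    (H : ∀ (κ : Type u) [Field κ] [Algebra k κ],
      NoZeroDivisorsAlong fun n ↦ tensorIdeal k (J n) (⊥ : Ideal κ)) :
    NoZeroDivisorsAlong fun n ↦ tensorIdeal k (J n) (IsLocalRing.maximalIdeal R ^ n) := by
  intro f g hf hg hfg
  by_contra! hcon
  obtain ⟨φ, a, L, hφ, hL0, hL⟩ := hf.exists_tensorSlice_limit_ne_zero hJ hcon.1
  obtain ⟨χ, b, M, hχ, hM0, hM⟩ := hg.exists_tensorSlice_limit_ne_zero hJ hcon.2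
  obtain ⟨V, _, _, _, π₀, _, hπ⟩ :=
    exists_isDiscreteValuationRing_isLocalHom_ne_zero (d := L * M)
      fun h ↦ mul_ne_zero hL0 hM0 h.eq_zero
  let : Algebra k V := (π₀.comp (algebraMap k R)).toAlgebra
  let π : R →ₐ[k] V := { π₀ with commutes' := fun _ ↦ rfl }
  let Φ := Algebra.TensorProduct.map (AlgHom.id k S) π
  have hpow (n : ℕ) : IsLocalRing.maximalIdeal R ^ n ≤
      (IsLocalRing.maximalIdeal V ^ n).comap π := by
    have hmax : IsLocalRing.maximalIdeal R ≤ (IsLocalRing.maximalIdeal V).comap π :=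
      fun x hx ↦ map_mem_nonunits_iff π₀ x |>.2 hx
    exact (Ideal.pow_right_mono hmax n).trans (Ideal.le_comap_pow _ n)
  have hle (n : ℕ) : tensorIdeal k (J n) (IsLocalRing.maximalIdeal R ^ n) ≤
      (tensorIdeal k (J n) (IsLocalRing.maximalIdeal V ^ n)).comap Φ := by
    rw [comap_map_tensorIdeal]
    exact tensorIdeal_mono (J n).comap_id.ge (hpow n)
  have hlimit {f : ℕ → S ⊗[k] R} {φ : S →ₗ[k] k} {a : ℕ} {L : R} (hφ : ∀ x ∈ J a, φ x = 0)
      (hL : ∀ n, tensorSlice R φ (f (n + a)) - L ∈ IsLocalRing.maximalIdeal R ^ n)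
      (hnull : IsNullAlong (fun n ↦ tensorIdeal k (J n) (IsLocalRing.maximalIdeal V ^ n)) (Φ ∘ f)) :
      π L = 0 := by
    refine eq_zero_of_forall_mem_pow (I := IsLocalRing.maximalIdeal V) fun n ↦ ?_
    have hslice := hnull.slice hJ (antitone_ideal_pow _) hφ n
    simp only [Function.comp_apply, Φ, tensorSlice_map] at hslice
    simpa using sub_mem hslice (hpow n (hL n))
  have hVdom := noZeroDivisorsAlong_tensorIdeal_of_isDiscreteValuationRing (k := k) (V := V) hJ H
  refine hπ ((map_mul π L M).trans (mul_eq_zero.2 ?_))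
  refine (hVdom (Φ ∘ f) (Φ ∘ g) (fun n ↦ ?_) (fun n ↦ ?_) fun n ↦ ?_).imp (hlimit hφ hL)
    (hlimit hχ hM)
  · simpa using hle n (hf n)
  · simpa using hle n (hg n)
  · simpa using hle n (hfg n)

end Arcs

section AlgClosed

variable {k S R : Type*} [Field k] [CommRing S] [CommRing R] [Algebra k S] [Algebra k R]

lemma exists_fg_subset_range_map_val {s : Set (S ⊗[k] R)} (hs : s.Finite) :
    ∃ A : Subalgebra k R, A.FG ∧ s ⊆ (Algebra.TensorProduct.map (AlgHom.id k S) A.val).range := by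
  obtain ⟨N, hN, hsN⟩ := TensorProduct.exists_finite_submodule_right_of_setFinite s hs
  obtain ⟨t, rfl⟩ := (Module.Finite.iff_fg.1 hN)
  refine ⟨Algebra.adjoin k t, ⟨t, rfl⟩, fun z hz ↦ ?_⟩
  obtain ⟨w, rfl⟩ := hsN hz
  refine ⟨LinearMap.lTensor S (Submodule.inclusion (Algebra.span_le_adjoin k (t : Set R))) w, ?_⟩
  change LinearMap.lTensor S (Algebra.adjoin k (t : Set R)).val.toLinearMap _ = _
  rw [← LinearMap.lTensor_comp_apply]
  rfl

variable [IsAlgClosed k]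

lemma exists_algHom_ne_zero [IsDomain R] [Algebra.FiniteType k R] {a : R} (ha : a ≠ 0) :
    ∃ χ : R →ₐ[k] k, χ a ≠ 0 := by
  have : IsJacobsonRing R := isJacobsonRing_of_finiteType (A := k)
  have hjac : (⊥ : Ideal R).jacobson = ⊥ := this.out (Ideal.isPrime_bot (α := R)).isRadical
  obtain ⟨M, hM, haM⟩ : ∃ M : Ideal R, M.IsMaximal ∧ a ∉ M := by
    by_contra! h
    exact ha (hjac.le (Ideal.mem_sInf.2 fun {M} hM ↦ h M hM.2))
  let := Ideal.Quotient.field M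
  have : Module.Finite k (R ⧸ M) := finite_of_finite_type_of_isJacobsonRing k (R ⧸ M)
  let e : k ≃ₐ[k] R ⧸ M := AlgEquiv.ofBijective (Algebra.ofId k (R ⧸ M))
    IsAlgClosed.algebraMap_bijective_of_isIntegral
  refine ⟨(e.symm : R ⧸ M →ₐ[k] k).comp (Ideal.Quotient.mkₐ k M), fun h ↦ haM ?_⟩
  rw [← Ideal.Quotient.eq_zero_iff_mem]
  simpa using h

lemma noZeroDivisors_tensorProduct_of_finiteType [IsDomain S] [IsDomain R]
    [Algebra.FiniteType k R] : NoZeroDivisors (S ⊗[k] R) where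
  eq_zero_or_eq_zero_of_mul_eq_zero {x y} hxy := by
    by_contra! hne
    have hslice {z : S ⊗[k] R} (hz : z ≠ 0) : ∃ φ : S →ₗ[k] k, tensorSlice R φ z ≠ 0 := by
      obtain ⟨φ, hφ⟩ := exists_rTensor_ne_zero k k hz
      exact ⟨φ, fun h ↦ hφ ((TensorProduct.lid k R).injective (h.trans (map_zero _).symm))⟩
    obtain ⟨φ, hφ⟩ := hslice hne.1
    obtain ⟨ψ, hψ⟩ := hslice hne.2
    obtain ⟨χ, hχ⟩ := exists_algHom_ne_zero (k := k) (mul_ne_zero hφ hψ)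
    let Φ := (Algebra.TensorProduct.rid k k S : S ⊗[k] k →ₐ[k] S).comp
      (Algebra.TensorProduct.map (AlgHom.id k S) χ)
    have hΦ (z : S ⊗[k] R) (φ : S →ₗ[k] k) (hz : Φ z = 0) : χ (tensorSlice R φ z) = 0 := by
      have hz' : Algebra.TensorProduct.map (AlgHom.id k S) χ z = 0 :=
        (Algebra.TensorProduct.rid k k S).injective (hz.trans (map_zero _).symm)
      simpa [hz'] using (tensorSlice_map (AlgHom.id k S) χ φ z).symm
    rw [map_mul, mul_ne_zero_iff] at hχ
    have hΦxy : Φ x * Φ y = 0 := by rw [← map_mul, hxy, map_zero]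
    exact (mul_eq_zero.1 hΦxy).elim (fun h ↦ hχ.1 (hΦ x φ h)) fun h ↦ hχ.2 (hΦ y ψ h)

theorem noZeroDivisors_tensorProduct [IsDomain S] [IsDomain R] : NoZeroDivisors (S ⊗[k] R) where
  eq_zero_or_eq_zero_of_mul_eq_zero {x y} hxy := by
    obtain ⟨A, hA, hxyA⟩ := exists_fg_subset_range_map_val (Set.toFinite {x, y})
    obtain ⟨x, rfl⟩ := hxyA (Set.mem_insert x {y})
    obtain ⟨y, rfl⟩ := hxyA (Set.mem_insert_of_mem _ rfl)
    have : Algebra.FiniteType k A := A.fg_iff_finiteType.1 hA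
    have hinj : Function.Injective (Algebra.TensorProduct.map (AlgHom.id k S) A.val) :=
      Module.Flat.lTensor_preserves_injective_linearMap (M := S) A.val.toLinearMap
        Subtype.val_injective
    have := noZeroDivisors_tensorProduct_of_finiteType (k := k) (S := S) (R := A)
    have hmul : x * y = 0 := hinj (by simpa using hxy)
    exact (mul_eq_zero.1 hmul).imp (fun h ↦ by simp [h]) fun h ↦ by simp [h]

end AlgClosed

section CompleteLocalDomains

variable {k : Type*} [Field k] [IsAlgClosed k]
  {S : Type*} [CommRing S] [Algebra k S] [IsDomain S] [IsNoetherianRing S] [IsLocalRing S]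
  [IsPrecomplete (IsLocalRing.maximalIdeal S) S]
  {R : Type u} [CommRing R] [Algebra k R] [IsDomain R] [IsNoetherianRing R] [IsLocalRing R]
  [IsPrecomplete (IsLocalRing.maximalIdeal R) R]

theorem noZeroDivisorsAlong_tensorIdeal :
    NoZeroDivisorsAlong fun n ↦
      tensorIdeal k (IsLocalRing.maximalIdeal S ^ n) (IsLocalRing.maximalIdeal R ^ n) := by
  refine noZeroDivisorsAlong_tensorIdeal_of_residueFields (antitone_ideal_pow _) fun κ _ _ ↦ ?_
  have hκS : NoZeroDivisorsAlong fun n ↦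
      tensorIdeal k (⊥ : Ideal κ) (IsLocalRing.maximalIdeal S ^ n) := by
    refine noZeroDivisorsAlong_tensorIdeal_of_residueFields antitone_const fun κ' _ _ ↦ ?_
    have := noZeroDivisors_tensorProduct (k := k) (S := κ) (R := κ')
    simpa [tensorIdeal] using noZeroDivisorsAlong_const_bot (C := κ ⊗[k] κ')
  convert hκS.comap (Algebra.TensorProduct.comm k S κ).toAlgHom.toRingHom using 2
  exact (comap_comm_tensorIdeal _ _).symm

end CompleteLocalDomains

section CompleteNoetherian

variable {R : Type*} [CommRing R] {I J : Ideal R}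

instance isPrecomplete_pi [IsPrecomplete I R] {ι : Type*} [Finite ι] :
    IsPrecomplete I (ι → R) := by
  classical
  have := Fintype.ofFinite ι
  refine AdicCompletion.of_surjective_iff.1 fun y ↦ ?_
  choose r hr using fun j ↦ AdicCompletion.of_surjective I R
    (AdicCompletion.pi I (fun _ : ι ↦ R) y j)
  refine ⟨r, (AdicCompletion.piEquivOfFintype I fun _ : ι ↦ R).injective ?_⟩
  ext1 j
  simpa only [AdicCompletion.piEquivOfFintype_apply, AdicCompletion.pi, LinearMap.pi_apply,
    AdicCompletion.map_of, LinearMap.proj_apply] using hr j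

instance isHausdorff_ideal [IsHausdorff I R] : IsHausdorff I J where
  haus' z hz := by
    refine Subtype.ext (eq_zero_of_forall_mem_pow (R := R) (I := I) fun n ↦ ?_)
    have hmap : (I ^ n • (⊤ : Submodule R J)).map J.subtype ≤ I ^ n := by
      rw [Submodule.map_smul'', smul_eq_mul]
      exact Ideal.mul_le_left
    exact hmap (Submodule.mem_map_of_mem (SModEq.zero.1 (hz n)))

/-- Nakayama's lemma over a complete ring. -/
lemma fg_of_le_span_sup_mul [IsAdicComplete I R] {s : Set R} (hs : s.Finite) (hsJ : s ⊆ J)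
    (h : J ≤ Ideal.span s ⊔ I * J) : J.FG := by
  have := hs.fintype
  let f : (s → R) →ₗ[R] J := Fintype.linearCombination R fun i : s ↦ (⟨i, hsJ i.2⟩ : J)
  have hf : Function.Surjective f := surjective_of_mkQ_comp_surjective (I := I) <|
    (Submodule.mkQ_surjective _).forall.2 fun z ↦ by
      obtain ⟨y, hy, w, hw, hyw⟩ := Submodule.mem_sup.1 (h z.2)
      rw [← Subtype.range_coe (s := s), Ideal.mem_span_range_iff_exists_fun] at hy
      obtain ⟨c, rfl⟩ := hy
      refine ⟨c, (Submodule.Quotient.eq _).2 ((Submodule.mem_smul_top_iff _ _ _).2 ?_)⟩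
      have hfc : (f c : R) = ∑ i, c i * i := by simp [f, Fintype.linearCombination_apply]
      have hw' : ((f c - z : J) : R) = -w := by simp [hfc, ← hyw]
      exact hw' ▸ neg_mem hw
  exact Module.Finite.iff_fg.1 (Module.Finite.of_surjective f hf)

lemma fg_of_fg_sup_span_singleton [IsAdicComplete I R] {x : R} (hx : x ∈ I)
    (hxJ : ∀ z, x * z ∈ J → z ∈ J) (h : (J ⊔ Ideal.span {x}).FG) : J.FG := by
  have hspan : J ⊔ Ideal.span {x} = Submodule.span R (J ∪ {x}) := by
    rw [Submodule.span_union, Submodule.span_eq]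
  obtain ⟨s, hs, hJs⟩ := (Submodule.fg_span_iff_fg_span_finset_subset _).1 (hspan ▸ h)
  have hle : J ≤ Ideal.span (s ∩ J) ⊔ Ideal.span {x} := by
    refine (le_sup_left.trans (hspan.trans hJs).le).trans (Submodule.span_le.2 fun y hy ↦ ?_)
    rcases hs hy with hyJ | rfl
    · exact Ideal.mem_sup_left (Ideal.subset_span ⟨hy, hyJ⟩)
    · exact Ideal.mem_sup_right (Ideal.mem_span_singleton_self y)
  refine fg_of_le_span_sup_mul (I := I) (s.finite_toSet.inter_of_left J) Set.inter_subset_right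
    fun z hz ↦ ?_
  obtain ⟨y, hy, w, hw, rfl⟩ := Submodule.mem_sup.1 (hle hz)
  obtain ⟨c, rfl⟩ := Ideal.mem_span_singleton'.1 hw
  have hyJ : y ∈ J := Ideal.span_le.2 Set.inter_subset_right hy
  have hcJ : c ∈ J := hxJ c (by simpa [mul_comm] using sub_mem hz hyJ)
  exact add_mem (Ideal.mem_sup_left hy) (Ideal.mem_sup_right (mul_comm c x ▸
    Ideal.mul_mem_mul hx hcJ))

lemma exists_maximal_not_fg (h : ¬ IsNoetherianRing R) :
    ∃ J : Ideal R, Maximal (fun J ↦ ¬ J.FG) J := by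
  obtain ⟨J, hJ⟩ : ∃ J : Ideal R, ¬ J.FG := by simpa [isNoetherianRing_iff_ideal_fg] using h
  refine (zorn_le_nonempty₀ {J : Ideal R | ¬ J.FG} (fun C hC hchain J hJ ↦
    ⟨sSup C, fun hfg ↦ ?_, fun _ ↦ le_sSup⟩) J hJ).imp fun _ h ↦ h.2
  obtain ⟨K, hK, hle⟩ := (CompleteLattice.isCompactElement_iff_le_of_directed_sSup_le _ _).1
    ((Submodule.fg_iff_compact _).1 hfg) C ⟨J, hJ⟩ hchain.directedOn le_rfl
  exact hC hK (hle.antisymm (le_sSup hK) ▸ hfg)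

lemma fg_of_le_of_isNoetherianRing_quotient (hI : I.FG) [IsNoetherianRing (R ⧸ I)] (hIJ : I ≤ J) :
    J.FG :=
  Ideal.fg_of_fg_map_of_fg_inf_ker_of_surjective (f := Ideal.Quotient.mk I)
    (IsNoetherian.noetherian _) (by rwa [Ideal.mk_ker, inf_eq_right.2 hIJ])
    Ideal.Quotient.mk_surjective

theorem isNoetherianRing_of_isAdicComplete [IsAdicComplete I R] (hI : I.FG)
    [IsNoetherianRing (R ⧸ I)] : IsNoetherianRing R := by
  by_contra hR
  obtain ⟨P, hP⟩ := exists_maximal_not_fg hR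
  have hprime : P.IsPrime := Ideal.isOka_fg.isPrime_of_maximal_not hP
  by_cases hIP : I ≤ P
  · exact hP.prop (fg_of_le_of_isNoetherianRing_quotient hI hIP)
  · obtain ⟨x, hxI, hxP⟩ := SetLike.not_le_iff_exists.1 hIP
    refine hP.prop (fg_of_fg_sup_span_singleton hxI (fun z h ↦ ?_) ?_)
    · exact (hprime.mem_or_mem h).resolve_left hxP
    · by_contra h
      exact hxP (hP.le_of_ge h le_sup_left (Ideal.mem_sup_right (Ideal.mem_span_singleton_self x)))

end CompleteNoetherian

section LinearDisjointness

lemma range_map_val_mono {k S R : Type*} [Field k] [CommRing S] [CommRing R] [Algebra k S]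
    [Algebra k R] {A B : Subalgebra k R} (h : A ≤ B) :
    (Algebra.TensorProduct.map (AlgHom.id k S) A.val).range ≤
      (Algebra.TensorProduct.map (AlgHom.id k S) B.val).range := by
  have hcomp : (Algebra.TensorProduct.map (AlgHom.id k S) B.val).comp
      (Algebra.TensorProduct.map (AlgHom.id k S) (Subalgebra.inclusion h)) =
        Algebra.TensorProduct.map (AlgHom.id k S) A.val := by
    ext <;> rfl
  rintro _ ⟨w, rfl⟩
  exact ⟨_, DFunLike.congr_fun hcomp w⟩

lemma exists_finiteDimensional_mem_range_map_val {k S L : Type*} [Field k] [CommRing S]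
    [Algebra k S] [Field L] [Algebra k L] [Algebra.IsAlgebraic k L] (z : S ⊗[k] L) :
    ∃ E : IntermediateField k L, FiniteDimensional k E ∧
      z ∈ (Algebra.TensorProduct.map (AlgHom.id k S) E.toSubalgebra.val).range := by
  obtain ⟨_, ⟨s, rfl⟩, hzs⟩ := exists_fg_subset_range_map_val (Set.finite_singleton z)
  have hle := IntermediateField.algebra_adjoin_le_adjoin k (s : Set L)
  exact ⟨_, IntermediateField.finiteDimensional_adjoin fun x _ ↦ Algebra.IsIntegral.isIntegral x,
    range_map_val_mono (S := S) hle (Set.singleton_subset_iff.1 hzs)⟩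

variable {k F : Type*} [Field k] [Field F] [Algebra k F] [IsIntegrallyClosedIn k F]

lemma exists_monic_map_eq_of_dvd_map {p : Polynomial k} (hp : p.Monic) {f : Polynomial F}
    (hf : f.Monic) (hfp : f ∣ p.map (algebraMap k F)) :
    ∃ g : Polynomial k, g.map (algebraMap k F) = f ∧ g.Monic := by
  have hlifts : f ∈ Polynomial.lifts (algebraMap k F) := by
    rw [Polynomial.lifts_iff_coeff_lifts]
    intro n
    obtain ⟨c, hc⟩ := (Polynomial.lifts_iff_coeff_lifts f).1
      (integralClosure.mem_lifts_of_monic_of_dvd_map F hp hf hfp) n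
    exact IsIntegrallyClosedIn.algebraMap_eq_of_integral (hc ▸ c.2)
  obtain ⟨g, hgf, -, hg⟩ := Polynomial.lifts_and_degree_eq_and_monic hlifts hf
  exact ⟨g, hgf, hg⟩

lemma irreducible_map_of_isIntegrallyClosedIn {p : Polynomial k} (hp : Irreducible p)
    (hmonic : p.Monic) : Irreducible (p.map (algebraMap k F)) := by
  have hinj := Polynomial.map_injective _ (algebraMap k F).injective
  rw [Polynomial.irreducible_of_monic (hmonic.map _)
    fun h ↦ hp.ne_one (hinj (h.trans (Polynomial.map_one _).symm))]
  intro f g hf hg hfg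
  obtain ⟨f, rfl, hf₀⟩ := exists_monic_map_eq_of_dvd_map hmonic hf ⟨g, hfg.symm⟩
  obtain ⟨g, rfl, hg₀⟩ := exists_monic_map_eq_of_dvd_map hmonic hg
    ⟨_, hfg.symm.trans (mul_comm _ _)⟩
  rw [← Polynomial.map_mul] at hfg
  exact ((Polynomial.irreducible_of_monic hmonic hp.ne_one).1 hp f g hf₀ hg₀ (hinj hfg)).imp
    (fun h ↦ by rw [h, Polynomial.map_one]) (fun h ↦ by rw [h, Polynomial.map_one])

lemma isField_tensorProduct_of_finite (E : Type*) [Field E] [Algebra k E] [FiniteDimensional k E]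
    [Algebra.IsSeparable k E] : IsField (F ⊗[k] E) := by
  obtain ⟨α, hα⟩ := Field.exists_primitive_element k E
  have hint : IsIntegral k α := Algebra.IsIntegral.isIntegral α
  let q := (minpoly k α).map (algebraMap k F)
  have : Fact (Irreducible q) := ⟨irreducible_map_of_isIntegrallyClosedIn
    (minpoly.irreducible hint) (minpoly.monic hint)⟩
  have hq : q ≠ 0 := this.out.ne_zero
  have hroot : Polynomial.aeval ((1 : F) ⊗ₜ[k] α) q = 0 := by
    rw [Polynomial.aeval_map_algebraMap, ← Algebra.TensorProduct.includeRight_apply,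
      Polynomial.aeval_algHom_apply, minpoly.aeval, map_zero]
  let ψ : AdjoinRoot q →ₐ[F] F ⊗[k] E := AdjoinRoot.liftAlgHom q (Algebra.ofId F _) _ hroot
  have hdim : Module.finrank F (AdjoinRoot q) = Module.finrank F (F ⊗[k] E) := by
    rw [(AdjoinRoot.powerBasis hq).finrank, AdjoinRoot.powerBasis_dim, Polynomial.natDegree_map,
      Module.finrank_baseChange, ← Field.primitive_element_iff_minpoly_natDegree_eq k α |>.1 hα]
  have : FiniteDimensional F (AdjoinRoot q) := (AdjoinRoot.powerBasis hq).finite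
  have hbij : Function.Bijective ψ := ⟨ψ.toRingHom.injective,
    (LinearMap.injective_iff_surjective_of_finrank_eq_finrank (f := ψ.toLinearMap) hdim).1
      ψ.toRingHom.injective⟩
  exact (AlgEquiv.ofBijective ψ hbij).symm.toMulEquiv.isField (Field.toIsField _)

theorem isField_tensorProduct_of_isAlgebraic [PerfectField k] (L : Type*) [Field L] [Algebra k L]
    [Algebra.IsAlgebraic k L] : IsField (F ⊗[k] L) := by
  refine ⟨exists_pair_ne _, mul_comm, fun {z} hz ↦ ?_⟩
  obtain ⟨E, _, w, hw⟩ := exists_finiteDimensional_mem_range_map_val z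
  obtain ⟨y, hy⟩ := (isField_tensorProduct_of_finite (F := F) E).mul_inv_cancel (a := w)
    fun h ↦ hz (by rw [← hw, h, map_zero])
  exact ⟨Algebra.TensorProduct.map (AlgHom.id k F) E.toSubalgebra.val y, by
    rw [← hw]
    exact (map_mul _ w y).symm.trans ((congrArg _ hy).trans (map_one _))⟩

end LinearDisjointness

section AdicCompletions

variable {T : Type*} [CommRing T] {I : Ideal T}

lemma mem_map_algebraMap_pow_iff (hI : I.FG) {n : ℕ} {x : AdicCompletion I T} :
    x ∈ I.map (algebraMap T (AdicCompletion I T)) ^ n ↔ AdicCompletion.evalₐ I n x = 0 := by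
  have hker := AdicCompletion.pow_smul_top_eq_ker_eval (I := I) (M := T) (n := n) hI
  have htop : I ^ n * ⊤ = I ^ n := Ideal.mul_top _
  have hmap : x ∈ (I ^ n).map (algebraMap T (AdicCompletion I T)) ↔
      x ∈ (I ^ n • ⊤ : Submodule T (AdicCompletion I T)) := by
    rw [Ideal.smul_top_eq_map]
    rfl
  rw [← Ideal.map_pow, hmap, hker, LinearMap.mem_ker]
  refine ⟨fun hx ↦ ?_, fun hx ↦ ?_⟩
  · rw [← AdicCompletion.factor_eval_eq_evalₐ I x htop.le, hx, map_zero]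
  · rw [← AdicCompletion.factor_evalₐ_eq_eval I x htop.ge, hx, map_zero]

lemma exists_sub_algebraMap_mem_pow (hI : I.FG) (x : AdicCompletion I T) (n : ℕ) :
    ∃ t, x - algebraMap T _ t ∈ I.map (algebraMap T (AdicCompletion I T)) ^ n := by
  obtain ⟨t, ht⟩ := Ideal.Quotient.mk_surjective (AdicCompletion.evalₐ I n x)
  refine ⟨t, (mem_map_algebraMap_pow_iff hI).2 ?_⟩
  rw [map_sub, AlgHom.commutes, ← ht, Ideal.Quotient.algebraMap_eq, sub_self]

lemma comap_algebraMap_map_pow (hI : I.FG) (n : ℕ) :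
    (I.map (algebraMap T (AdicCompletion I T)) ^ n).comap (algebraMap T _) = I ^ n := by
  ext t
  rw [Ideal.mem_comap, mem_map_algebraMap_pow_iff hI, AlgHom.commutes,
    Ideal.Quotient.algebraMap_eq, Ideal.Quotient.eq_zero_iff_mem]

lemma sub_mem_pow_of_sub_algebraMap_mem_pow (hI : I.FG) {x : AdicCompletion I T} {n : ℕ} {s t : T}
    (hs : x - algebraMap T _ s ∈ I.map (algebraMap T (AdicCompletion I T)) ^ n)
    (ht : x - algebraMap T _ t ∈ I.map (algebraMap T (AdicCompletion I T)) ^ n) :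
    t - s ∈ I ^ n := by
  rw [← comap_algebraMap_map_pow hI, Ideal.mem_comap, map_sub, ← sub_sub_sub_cancel_left _ _ x]
  exact sub_mem hs ht

lemma exists_notMem_pow_of_sub_algebraMap_mem_pow (hI : I.FG) {x : AdicCompletion I T} (hx : x ≠ 0)
    {f : ℕ → T} (hf : ∀ n, x - algebraMap T _ (f n) ∈
      I.map (algebraMap T (AdicCompletion I T)) ^ n) :
    ∃ n, f n ∉ I ^ n := by
  have := AdicCompletion.isAdicComplete_self I hI
  by_contra! h
  refine hx (eq_zero_of_forall_mem_pow (I := I.map (algebraMap T (AdicCompletion I T))) fun n ↦ ?_)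
  have hfn := h n
  rw [← comap_algebraMap_map_pow hI, Ideal.mem_comap] at hfn
  exact (Submodule.sub_mem_iff_left _ hfn).1 (hf n)

lemma map_mem_map_algebraMap_pow {φ : T →+* T} (hφ : I ≤ I.comap φ)
    {φ' : AdicCompletion I T →+* AdicCompletion I T}
    (h : φ'.comp (algebraMap T _) = (algebraMap T _).comp φ) {n : ℕ} {x : AdicCompletion I T}
    (hx : x ∈ I.map (algebraMap T (AdicCompletion I T)) ^ n) :
    φ' x ∈ I.map (algebraMap T (AdicCompletion I T)) ^ n := by
  refine Ideal.pow_right_mono ?_ n ((Ideal.map_pow φ' _ n).le (Ideal.mem_map_of_mem φ' hx))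
  rw [Ideal.map_map, h, ← Ideal.map_map]
  exact Ideal.map_mono (Ideal.map_le_iff_le_comap.2 hφ)

lemma exists_ringHom_comp_algebraMap {φ : T →+* T} (hφ : I ≤ I.comap φ) :
    ∃ φ' : AdicCompletion I T →+* AdicCompletion I T,
      φ'.comp (algebraMap T _) = (algebraMap T _).comp φ := by
  have hpow (n : ℕ) : I ^ n ≤ (I ^ n).comap φ :=
    (Ideal.pow_right_mono hφ n).trans (Ideal.le_comap_pow φ n)
  refine ⟨AdicCompletion.liftRingHom I (fun n ↦ (Ideal.quotientMap (I ^ n) φ (hpow n)).comp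
    (AdicCompletion.evalₐ I n : AdicCompletion I T →+* T ⧸ I ^ n)) fun {m n} hmn ↦ ?_, ?_⟩
  · ext x
    obtain ⟨a, rfl⟩ := AdicCompletion.mk_surjective I T x
    have ha : Ideal.Quotient.mk (I ^ m) (a n) = Ideal.Quotient.mk (I ^ m) (a m) := by
      rw [Ideal.Quotient.eq, ← neg_sub, neg_mem_iff]
      simpa using SModEq.sub_mem.1 (a.2 hmn)
    simpa [Ideal.quotientMap_mk] using congrArg (Ideal.quotientMap (I ^ m) φ (hpow m)) ha
  · refine RingHom.ext fun t ↦ AdicCompletion.ext_evalₐ fun n ↦ ?_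
    simp [AdicCompletion.evalₐ_liftRingHom]

lemma ringHom_eq_id_of_comp_algebraMap (hI : I.FG) {φ : AdicCompletion I T →+* AdicCompletion I T}
    (h : φ.comp (algebraMap T _) = algebraMap T _) : φ = RingHom.id _ := by
  have := AdicCompletion.isAdicComplete_self I hI
  refine RingHom.ext fun x ↦ sub_eq_zero.1 (eq_zero_of_forall_mem_pow
    (I := I.map (algebraMap T (AdicCompletion I T))) fun n ↦ ?_)
  obtain ⟨t, ht⟩ := exists_sub_algebraMap_mem_pow hI x n
  have hφ := map_mem_map_algebraMap_pow (φ := RingHom.id T) le_rfl h ht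
  rw [map_sub, ← RingHom.comp_apply, h] at hφ
  simpa using sub_mem hφ ht

lemma exists_ringEquiv_comp_algebraMap (hI : I.FG) {σ : T ≃+* T}
    (hσ : I.comap (σ : T →+* T) = I) :
    ∃ σ' : AdicCompletion I T ≃+* AdicCompletion I T,
      (σ' : AdicCompletion I T →+* AdicCompletion I T).comp (algebraMap T _) =
        (algebraMap T _).comp (σ : T →+* T) := by
  have hσ' : I ≤ I.comap (σ.symm : T →+* T) := fun t ht ↦
    hσ.le (show σ (σ.symm t) ∈ I by rwa [σ.apply_symm_apply])
  obtain ⟨f, hf⟩ := exists_ringHom_comp_algebraMap (φ := (σ : T →+* T)) hσ.ge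
  obtain ⟨g, hg⟩ := exists_ringHom_comp_algebraMap hσ'
  refine ⟨RingEquiv.ofRingHom f g ?_ ?_, hf⟩ <;> refine ringHom_eq_id_of_comp_algebraMap hI ?_
  · rw [RingHom.comp_assoc, hg, ← RingHom.comp_assoc, hf, RingHom.comp_assoc]
    ext
    simp
  · rw [RingHom.comp_assoc, hf, ← RingHom.comp_assoc, hg, RingHom.comp_assoc]
    ext
    simp

end AdicCompletions

section MinimalPrimes

variable {E : Type*} [CommRing E] [IsNoetherianRing E] [IsLocalRing E] {P : Ideal E}

lemma mem_of_forall_mem_sup_pow {u : E} (h : ∀ n, u ∈ P ⊔ IsLocalRing.maximalIdeal E ^ n) :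
    u ∈ P := by
  have : IsHausdorff (IsLocalRing.maximalIdeal E) (E ⧸ P) := inferInstance
  refine Ideal.Quotient.eq_zero_iff_mem.1 (this.haus' _ fun n ↦ ?_)
  rw [SModEq.zero]
  obtain ⟨p, hp, y, hy, rfl⟩ := Submodule.mem_sup.1 (h n)
  rw [map_add, Ideal.Quotient.eq_zero_iff_mem.2 hp, zero_add, ← mul_one y]
  exact Submodule.smul_mem_smul hy (Submodule.mem_top (x := (1 : E ⧸ P)))

lemma exists_comap_eq_of_sub_mem_pow (hP : P ∈ minimalPrimes E) :
    ∃ (u : E) (N : ℕ), ∀ e : E ≃+* E,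
      e u - u ∈ IsLocalRing.maximalIdeal E ^ N → P.comap (e : E →+* E) = P := by
  have hprime : P.IsPrime := hP.1.1
  let others := ((minimalPrimes.finite_of_isNoetherianRing E).subset
    (Set.sdiff_subset (t := {P}))).toFinset
  obtain ⟨u, hu, huP⟩ : ∃ u ∈ others.inf id, u ∉ P := by
    refine SetLike.not_le_iff_exists.1 fun hle ↦ ?_
    obtain ⟨Q, hQ, hQP⟩ := hprime.inf_le'.1 hle
    obtain ⟨hQmin, hne⟩ := (Set.Finite.mem_toFinset _).1 hQ
    exact hne (le_antisymm hQP (hP.2 hQmin.1 hQP))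
  obtain ⟨N, hN⟩ : ∃ N, u ∉ P ⊔ IsLocalRing.maximalIdeal E ^ N := by
    by_contra! h
    exact huP (mem_of_forall_mem_sup_pow h)
  refine ⟨u, N, fun e he ↦ by_contra fun hne ↦ hN ?_⟩
  have hmin : P.comap (e : E →+* E) ∈ minimalPrimes E := by
    have hbot : (⊥ : Ideal E).comap (e : E →+* E) = ⊥ :=
      (RingHom.injective_iff_ker_eq_bot _).1 e.injective
    change P.comap _ ∈ (⊥ : Ideal E).minimalPrimes
    rw [← hbot, Ideal.comap_minimalPrimes_eq_of_surjective (f := (e : E →+* E)) e.surjective]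
    exact ⟨P, hP, rfl⟩
  have hePu : e u ∈ P :=
    (Finset.inf_le ((Set.Finite.mem_toFinset _).2 ⟨hmin, hne⟩) :
      others.inf id ≤ P.comap (e : E →+* E)) hu
  rw [← sub_sub_cancel (e u) u]
  exact sub_mem (Ideal.mem_sup_left hePu) (Ideal.mem_sup_right he)

end MinimalPrimes

section AdicCompletionsMaximal

variable {T : Type*} [CommRing T] {I : Ideal T} [I.IsMaximal]

lemma isMaximal_map_algebraMap (hI : I.FG) :
    (I.map (algebraMap T (AdicCompletion I T))).IsMaximal :=
  AdicCompletion.isMaximal_map_of_le I I le_rfl hI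

lemma isLocalRing_adicCompletion (hI : I.FG) : IsLocalRing (AdicCompletion I T) :=
  have := isMaximal_map_algebraMap hI
  have := AdicCompletion.isAdicComplete_self I hI
  isLocalRing_of_isAdicComplete_maximal (I.map (algebraMap T (AdicCompletion I T)))

lemma maximalIdeal_adicCompletion (hI : I.FG) [IsLocalRing (AdicCompletion I T)] :
    IsLocalRing.maximalIdeal (AdicCompletion I T) = I.map (algebraMap T _) :=
  (IsLocalRing.eq_maximalIdeal (isMaximal_map_algebraMap hI)).symm

lemma isNoetherianRing_adicCompletion (hI : I.FG) : IsNoetherianRing (AdicCompletion I T) := by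
  have := isMaximal_map_algebraMap hI
  have := AdicCompletion.isAdicComplete_self I hI
  let := Ideal.Quotient.field (I.map (algebraMap T (AdicCompletion I T)))
  exact isNoetherianRing_of_isAdicComplete (I := I.map (algebraMap T (AdicCompletion I T)))
    (hI.map _)

end AdicCompletionsMaximal

section BaseChange

variable {k Ω A : Type*} [Field k] [CommRing Ω] [CommRing A] [Algebra k Ω] [Algebra k A]
  {m K : Ideal A}

lemma ker_map_eq_tensorIdeal {S R S' R' : Type*} [CommRing S] [Algebra k S] [CommRing R]
    [Algebra k R] [CommRing S'] [Algebra k S'] [CommRing R'] [Algebra k R'] (g : S →ₐ[k] S')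
    (h : R →ₐ[k] R') : RingHom.ker (Algebra.TensorProduct.map g h) =
      tensorIdeal k (RingHom.ker g) (RingHom.ker h) := by
  have hbot : tensorIdeal k (⊥ : Ideal S') (⊥ : Ideal R') = ⊥ := by simp [tensorIdeal]
  rw [RingHom.ker_eq_comap_bot, ← hbot, comap_map_tensorIdeal]
  rfl

lemma tensorIdeal_bot_pow (m : Ideal A) (n : ℕ) :
    tensorIdeal k (⊥ : Ideal Ω) m ^ n = tensorIdeal k ⊥ (m ^ n) := by
  simp [tensorIdeal, Ideal.map_pow]

lemma fg_tensorIdeal_bot (hm : m.FG) : (tensorIdeal k (⊥ : Ideal Ω) m).FG := by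
  rw [tensorIdeal, Ideal.map_bot, bot_sup_eq]
  exact hm.map (Algebra.TensorProduct.includeRight : A →ₐ[k] Ω ⊗[k] A).toRingHom

lemma ker_map_id_mk (m : Ideal A) :
    RingHom.ker (Algebra.TensorProduct.map (AlgHom.id k Ω) (Ideal.Quotient.mkₐ k m)) =
      tensorIdeal k ⊥ m := by
  rw [ker_map_eq_tensorIdeal]
  exact congrArg₂ _ ((RingHom.injective_iff_ker_eq_bot _).1 Function.injective_id)
    (Ideal.Quotient.mkₐ_ker k m)

lemma isMaximal_tensorIdeal_bot (h : IsField (Ω ⊗[k] (A ⧸ m))) :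
    (tensorIdeal k (⊥ : Ideal Ω) m).IsMaximal := by
  rw [← ker_map_id_mk]
  exact Ideal.Quotient.maximal_of_isField _ ((Ideal.quotientKerAlgEquivOfSurjective
    (TensorProduct.map_surjective Function.surjective_id
      (Ideal.Quotient.mkₐ_surjective k m))).toMulEquiv.isField h)

lemma rTensor_mem_tensorIdeal_bot {Ω' : Type*} [CommRing Ω'] [Algebra k Ω'] (l : Ω →ₗ[k] Ω')
    {z : Ω ⊗[k] A} (hz : z ∈ tensorIdeal k ⊥ K) :
    LinearMap.rTensor A l z ∈ tensorIdeal k (⊥ : Ideal Ω') K := by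
  refine mem_tensorIdeal_iff.2 fun φ _ ↦ ?_
  have hslice : tensorSlice A φ (LinearMap.rTensor A l z) = tensorSlice A (φ ∘ₗ l) z := by
    simp [tensorSlice, LinearMap.rTensor_comp]
  rw [hslice]
  exact mem_tensorIdeal_iff.1 hz _ fun x hx ↦ by rw [Ideal.mem_bot.1 hx, map_zero]

lemma eq_zero_of_forall_mem_tensorIdeal_bot [IsHausdorff m A] {z : Ω ⊗[k] A}
    (h : ∀ n, z ∈ tensorIdeal k ⊥ (m ^ n)) : z = 0 := by
  by_contra hz
  obtain ⟨φ, hφ⟩ := exists_rTensor_ne_zero k k hz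
  refine hφ ((TensorProduct.lid k A).injective ?_)
  rw [map_zero]
  exact eq_zero_of_forall_mem_pow fun n ↦ mem_tensorIdeal_iff.1 (h n) φ
    fun x hx ↦ by rw [Ideal.mem_bot.1 hx, map_zero]

lemma eq_sum_tmul_tensorSlice {ι : Type*} [Fintype ι] (c : Module.Basis ι k Ω) (z : Ω ⊗[k] A) :
    z = ∑ i, c i ⊗ₜ tensorSlice A (c.coord i) z := by
  induction z with
  | zero => simp
  | add x y hx hy => simp only [map_add, tmul_add, Finset.sum_add_distrib, ← hx, ← hy]
  | tmul x y =>
    simp only [tensorSlice_tmul, Module.Basis.coord_apply, ← smul_tmul, ← sum_tmul, c.sum_repr]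

lemma IsCauchyAlong.exists_sub_mem_tensorIdeal_bot [Nontrivial Ω] [Module.Finite k Ω]
    [IsPrecomplete m A] {f : ℕ → Ω ⊗[k] A}
    (hf : IsCauchyAlong (fun n ↦ tensorIdeal k ⊥ (m ^ n)) f) :
    ∃ b, ∀ n, f n - b ∈ tensorIdeal k ⊥ (m ^ n) := by
  let c := Module.finBasis k Ω
  have hslice (i) : IsCauchyAlong (fun n ↦ m ^ n) fun n ↦ tensorSlice A (c.coord i) (f n) :=
    fun n ↦ by
      rw [← map_sub]
      exact mem_tensorIdeal_iff.1 (hf n) _ fun x hx ↦ by rw [Ideal.mem_bot.1 hx, map_zero]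
  choose L hL using fun i ↦ (hslice i).exists_sub_mem_pow
  refine ⟨∑ i, c i ⊗ₜ L i, fun n ↦ ?_⟩
  rw [eq_sum_tmul_tensorSlice c (f n), ← Finset.sum_sub_distrib]
  refine Ideal.sum_mem _ fun i _ ↦ ?_
  rw [← tmul_sub, ← mul_one (c i), ← one_mul (_ - _), ← Algebra.TensorProduct.tmul_mul_tmul]
  exact Ideal.mul_mem_left _ _ (Ideal.mem_sup_right (Ideal.mem_map_of_mem _ (hL i n)))

end BaseChange

section ExtendedFunctionals

variable {k k₁ Ω A : Type*} [Field k] [Field k₁] [Algebra k k₁] [CommRing Ω] [CommRing A]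
  [Algebra k Ω] [Algebra k₁ Ω] [IsScalarTower k k₁ Ω] [Algebra k A] {m K : Ideal A}

/-- The completed base change of `A` from `k` to `Ω`, with respect to the ideal `m` of `A`. -/
abbrev BaseChangeCompletion (k Ω : Type*) {A : Type*} [Field k] [CommRing Ω] [CommRing A]
    [Algebra k Ω] [Algebra k A] (m : Ideal A) :=
  AdicCompletion (tensorIdeal k (⊥ : Ideal Ω) m) (Ω ⊗[k] A)

/-- The ideal generated by `m` in the completed base change. -/
noncomputable abbrev baseChangeIdeal (k Ω : Type*) {A : Type*} [Field k] [CommRing Ω] [CommRing A]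
    [Algebra k Ω] [Algebra k A] (m : Ideal A) : Ideal (BaseChangeCompletion k Ω m) :=
  (tensorIdeal k (⊥ : Ideal Ω) m).map (algebraMap (Ω ⊗[k] A) _)

lemma algebraMap_mem_baseChangeIdeal_pow (hm : m.FG) {n : ℕ} {t : Ω ⊗[k] A} :
    algebraMap _ (BaseChangeCompletion k Ω m) t ∈ baseChangeIdeal k Ω m ^ n ↔
      t ∈ tensorIdeal k ⊥ (m ^ n) := by
  rw [← Ideal.mem_comap, comap_algebraMap_map_pow (fg_tensorIdeal_bot hm), tensorIdeal_bot_pow]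

/-- The inclusion `k₁ ⊗[k] A → Ω ⊗[k] A` of base changes along `k₁ → Ω`. -/
noncomputable abbrev baseChangeIncl (k k₁ Ω A : Type*) [Field k] [Field k₁] [Algebra k k₁]
    [CommRing Ω] [CommRing A] [Algebra k Ω] [Algebra k₁ Ω] [IsScalarTower k k₁ Ω] [Algebra k A] :
    k₁ ⊗[k] A →ₐ[k] Ω ⊗[k] A :=
  Algebra.TensorProduct.map (IsScalarTower.toAlgHom k k₁ Ω) (AlgHom.id k A)

/-- `b` is the value at `x` of the continuous extension `Ω ⊗̂ A → k₁ ⊗ A` of the functional `l`;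
the extension itself is not constructed, only its values modulo the powers of `m`. -/
def IsExtendedValue (l : Ω →ₗ[k₁] k₁) (x : BaseChangeCompletion k Ω m) (b : k₁ ⊗[k] A) : Prop :=
  ∀ n t, x - algebraMap _ _ t ∈ baseChangeIdeal k Ω m ^ n →
    LinearMap.rTensor A (l.restrictScalars k) t - b ∈ tensorIdeal k ⊥ (m ^ n)

lemma exists_rTensor_notMem_tensorIdeal_bot (k₁ : Type*) [Field k₁] [Algebra k k₁] [Algebra k₁ Ω]
    [IsScalarTower k k₁ Ω] {z : Ω ⊗[k] A} (hz : z ∉ tensorIdeal k ⊥ K) :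
    ∃ l : Ω →ₗ[k₁] k₁,
      LinearMap.rTensor A (l.restrictScalars k) z ∉ tensorIdeal k (⊥ : Ideal k₁) K := by
  rw [← ker_map_id_mk, RingHom.mem_ker] at hz
  obtain ⟨l, hl⟩ := exists_rTensor_ne_zero k k₁ hz
  refine ⟨l, fun hmem ↦ hl ?_⟩
  rw [← ker_map_id_mk, RingHom.mem_ker] at hmem
  refine Eq.trans ?_ hmem
  change LinearMap.rTensor _ _ (LinearMap.lTensor _ (Ideal.Quotient.mkₐ k K).toLinearMap z) =
    LinearMap.lTensor _ (Ideal.Quotient.mkₐ k K).toLinearMap (LinearMap.rTensor _ _ z)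
  rw [← LinearMap.comp_apply, ← LinearMap.comp_apply, LinearMap.rTensor_comp_lTensor,
    LinearMap.lTensor_comp_rTensor]

lemma exists_isExtendedValue_ne_zero (k₁ : Type*) [Field k₁] [Algebra k k₁] [Algebra k₁ Ω]
    [IsScalarTower k k₁ Ω] [FiniteDimensional k k₁] [IsPrecomplete m A] (hm : m.FG)
    {x : BaseChangeCompletion k Ω m} (hx : x ≠ 0) :
    ∃ (l : Ω →ₗ[k₁] k₁) (b : k₁ ⊗[k] A), b ≠ 0 ∧ IsExtendedValue l x b := by
  have hI := fg_tensorIdeal_bot (k := k) (Ω := Ω) hm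
  choose f hf using exists_sub_algebraMap_mem_pow hI x
  have happrox {n : ℕ} {t t' : Ω ⊗[k] A} (ht : x - algebraMap _ _ t ∈ baseChangeIdeal k Ω m ^ n)
      (ht' : x - algebraMap _ _ t' ∈ baseChangeIdeal k Ω m ^ n) :
      t' - t ∈ tensorIdeal k ⊥ (m ^ n) :=
    (tensorIdeal_bot_pow m n).le (sub_mem_pow_of_sub_algebraMap_mem_pow hI ht ht')
  obtain ⟨n, hn⟩ := exists_notMem_pow_of_sub_algebraMap_mem_pow hI hx hf
  rw [tensorIdeal_bot_pow] at hn
  obtain ⟨l, hl⟩ := exists_rTensor_notMem_tensorIdeal_bot k₁ hn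
  have hcauchy : IsCauchyAlong (fun n ↦ tensorIdeal k (⊥ : Ideal k₁) (m ^ n))
      fun n ↦ LinearMap.rTensor A (l.restrictScalars k) (f n) := fun n ↦ by
    rw [← map_sub]
    exact rTensor_mem_tensorIdeal_bot _
      (happrox (hf n) (Ideal.pow_le_pow_right n.le_succ (hf (n + 1))))
  obtain ⟨b, hb⟩ := hcauchy.exists_sub_mem_tensorIdeal_bot
  refine ⟨l, b, ?_, fun n t ht ↦ ?_⟩
  · rintro rfl
    exact hl (by simpa using hb n)
  · rw [← sub_add_sub_cancel, ← map_sub]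
    exact add_mem (rTensor_mem_tensorIdeal_bot _ (happrox (hf n) ht)) (hb n)

lemma IsExtendedValue.eq_zero [IsHausdorff m A] {l : Ω →ₗ[k₁] k₁} {b : k₁ ⊗[k] A}
    (h : IsExtendedValue (m := m) l 0 b) : b = 0 :=
  eq_zero_of_forall_mem_tensorIdeal_bot fun n ↦ by
    have hb := h n 0 (by rw [map_zero, sub_zero]; exact zero_mem _)
    rwa [map_zero, zero_sub, neg_mem_iff] at hb

lemma rTensor_baseChangeIncl_mul (l : Ω →ₗ[k₁] k₁) (a : k₁ ⊗[k] A) (z : Ω ⊗[k] A) :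
    LinearMap.rTensor A (l.restrictScalars k) (baseChangeIncl k k₁ Ω A a * z) =
      a * LinearMap.rTensor A (l.restrictScalars k) z := by
  induction a with
  | zero => simp
  | add x y hx hy => simp only [map_add, add_mul, hx, hy]
  | tmul x y =>
    induction z with
    | zero => simp
    | add x y hx hy => simp only [map_add, mul_add, hx, hy]
    | tmul u v =>
      simp [← Algebra.smul_def]

lemma IsExtendedValue.mul (hm : m.FG) {l : Ω →ₗ[k₁] k₁} {x : BaseChangeCompletion k Ω m}
    {b : k₁ ⊗[k] A} (h : IsExtendedValue l x b) (a : k₁ ⊗[k] A) :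
    IsExtendedValue l (algebraMap _ _ (baseChangeIncl k k₁ Ω A a) * x) (a * b) := by
  intro n t ht
  obtain ⟨s, hs⟩ := exists_sub_algebraMap_mem_pow (fg_tensorIdeal_bot hm) x n
  have hts : t - baseChangeIncl k k₁ Ω A a * s ∈ tensorIdeal k ⊥ (m ^ n) := by
    rw [← algebraMap_mem_baseChangeIdeal_pow hm, map_sub, map_mul]
    convert sub_mem (Ideal.mul_mem_left _ (algebraMap _ _ (baseChangeIncl k k₁ Ω A a)) hs) ht
      using 1
    ring
  have hl := rTensor_mem_tensorIdeal_bot (l.restrictScalars k) hts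
  rw [map_sub, rTensor_baseChangeIncl_mul] at hl
  convert add_mem hl (Ideal.mul_mem_left _ a (h n s hs)) using 1
  ring

lemma baseChangeIncl_mem_nonZeroDivisors [FiniteDimensional k k₁] [IsDomain (k₁ ⊗[k] A)]
    [IsAdicComplete m A] (hm : m.FG) {a : k₁ ⊗[k] A} (ha : a ≠ 0) :
    algebraMap _ (BaseChangeCompletion k Ω m) (baseChangeIncl k k₁ Ω A a) ∈
      nonZeroDivisors (BaseChangeCompletion k Ω m) := by
  refine mem_nonZeroDivisors_iff_right.2 fun x hx ↦ by_contra fun hne ↦ ?_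
  obtain ⟨l, b, hb, hl⟩ := exists_isExtendedValue_ne_zero k₁ hm hne
  have hmul := hl.mul hm a
  rw [mul_comm, hx] at hmul
  exact mul_ne_zero ha hb hmul.eq_zero

end ExtendedFunctionals

section GaloisDescent

variable {k k₁ Ω A : Type*} [Field k] [Field k₁] [Algebra k k₁] [Field Ω] [CommRing A]
  [Algebra k Ω] [Algebra k₁ Ω] [IsScalarTower k k₁ Ω] [Algebra k A] {m : Ideal A}

lemma exists_finsupp_algEquiv_eq_sum [PerfectField k] [IsAlgClosed Ω] [Algebra.IsAlgebraic k Ω]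
    (l : Ω →ₗ[k] k) (E : IntermediateField k Ω) [FiniteDimensional k E] :
    ∃ c : (Ω ≃ₐ[k] Ω) →₀ Ω, ∀ x ∈ E, algebraMap k Ω (l x) = c.sum fun τ a ↦ a * τ x := by
  classical
  have hspan := (linearIndependent_toLinearMap k E Ω).span_eq_top_of_card_eq_finrank' (by
    rw [Module.finrank_linearMap, Module.finrank_self, mul_one]
    exact AlgHom.card k E Ω)
  obtain ⟨c, hc⟩ := (Submodule.mem_span_range_iff_exists_fun Ω).1
    (hspan.ge (Submodule.mem_top (x := Algebra.linearMap k Ω ∘ₗ l ∘ₗ E.val.toLinearMap)))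
  have hext (χ : E →ₐ[k] Ω) : ∃ τ : Ω ≃ₐ[k] Ω, ∀ x : E, τ x = χ x := by
    obtain ⟨τ, hτ⟩ := IsAlgClosed.surjective_domRestrict_of_isAlgebraic (K := k) (L := E) (M := Ω)
      (E := Ω) χ
    exact ⟨(Algebra.IsAlgebraic.algEquivEquivAlgHom k Ω).symm τ, DFunLike.congr_fun hτ⟩
  choose τ hτ using hext
  refine ⟨∑ χ, Finsupp.single (τ χ) (c χ), fun x hx ↦ ?_⟩
  rw [← Finsupp.sum_finsetSum_index (by simp) (by simp [add_mul])]
  simpa [Finsupp.sum_single_index, hτ _ ⟨x, hx⟩] using (LinearMap.congr_fun hc ⟨x, hx⟩).symm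

lemma exists_finset_forall_rTensor_eq (t : Ω ⊗[k] A) : ∃ s : Finset Ω, ∀ g h : Ω →ₗ[k] Ω,
    Set.EqOn g h s → LinearMap.rTensor A g t = LinearMap.rTensor A h t := by
  classical
  induction t with
  | zero => exact ⟨∅, fun g h _ ↦ by simp⟩
  | add x y hx hy =>
    obtain ⟨s, hs⟩ := hx
    obtain ⟨s', hs'⟩ := hy
    refine ⟨s ∪ s', fun g h hgh ↦ ?_⟩
    rw [Finset.coe_union, Set.eqOn_union] at hgh
    rw [map_add, map_add, hs g h hgh.1, hs' g h hgh.2]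
  | tmul x y =>
    exact ⟨{x}, fun g h hgh ↦ by simp [hgh (show x ∈ (({x} : Finset Ω) : Set Ω) by simp)]⟩

/-- The automorphism `σ ⊗ id` of `Ω ⊗[k] A`. -/
noncomputable abbrev baseChangeAut (A : Type*) [CommRing A] [Algebra k A] (σ : Ω ≃ₐ[k] Ω) :
    Ω ⊗[k] A ≃ₐ[k] Ω ⊗[k] A :=
  Algebra.TensorProduct.congr σ AlgEquiv.refl

lemma exists_algebraMap_rTensor_eq_sum [PerfectField k₁] [IsAlgClosed Ω]
    [Algebra.IsAlgebraic k₁ Ω] (l : Ω →ₗ[k₁] k₁) (t : Ω ⊗[k] A) :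
    ∃ c : (Ω ≃ₐ[k₁] Ω) →₀ Ω,
      baseChangeIncl k k₁ Ω A (LinearMap.rTensor A (l.restrictScalars k) t) =
        c.sum fun τ a ↦ (a ⊗ₜ 1) * baseChangeAut A (τ.restrictScalars k) t := by
  obtain ⟨s, hs⟩ := exists_finset_forall_rTensor_eq t
  have : FiniteDimensional k₁ (IntermediateField.adjoin k₁ (s : Set Ω)) :=
    IntermediateField.finiteDimensional_adjoin fun x _ ↦ Algebra.IsIntegral.isIntegral x
  obtain ⟨c, hc⟩ := exists_finsupp_algEquiv_eq_sum l (IntermediateField.adjoin k₁ (s : Set Ω))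
  let g : Ω →ₗ[k] Ω := c.sum fun τ a ↦ LinearMap.mulLeft k a ∘ₗ (τ.restrictScalars k).toLinearMap
  have hg (z : Ω ⊗[k] A) : LinearMap.rTensor A g z =
      c.sum fun τ a ↦ (a ⊗ₜ 1) * baseChangeAut A (τ.restrictScalars k) z := by
    induction z with
    | zero => simp
    | add x y hx hy => simp only [map_add, hx, hy, mul_add, Finsupp.sum_add]
    | tmul x y => simp [g, Finsupp.sum, sum_tmul]
  refine ⟨c, ?_⟩
  rw [← hg, ← hs ((IsScalarTower.toAlgHom k k₁ Ω).toLinearMap ∘ₗ l.restrictScalars k) g]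
  · rw [LinearMap.rTensor_comp]
    rfl
  · intro x hx
    simpa [g, Finsupp.sum] using hc x (IntermediateField.subset_adjoin _ _ hx)

/-- `σ'` is the automorphism of the completed base change induced by `σ`, characterised by its
values modulo the powers of `m`. -/
def IsCompletedAut (σ : Ω ≃ₐ[k] Ω)
    (σ' : BaseChangeCompletion k Ω m ≃+* BaseChangeCompletion k Ω m) : Prop :=
  ∀ n x t, x - algebraMap _ _ t ∈ baseChangeIdeal k Ω m ^ n →
    σ' x - algebraMap _ _ (baseChangeAut A σ t) ∈ baseChangeIdeal k Ω m ^ n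

lemma exists_isCompletedAut (hm : m.FG) (σ : Ω ≃ₐ[k] Ω) :
    ∃ σ' : BaseChangeCompletion k Ω m ≃+* BaseChangeCompletion k Ω m, IsCompletedAut σ σ' := by
  let e : Ω ⊗[k] A ≃+* Ω ⊗[k] A := (baseChangeAut A σ).toRingEquiv
  have hcomap : (tensorIdeal k ⊥ m).comap (e : Ω ⊗[k] A →+* Ω ⊗[k] A) = tensorIdeal k ⊥ m :=
    (comap_map_tensorIdeal (σ : Ω →ₐ[k] Ω) (AlgHom.id k A) ⊥ m).trans
      (congrArg (tensorIdeal k · m) ((RingHom.injective_iff_ker_eq_bot _).1 σ.injective))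
  obtain ⟨σ', hσ'⟩ := exists_ringEquiv_comp_algebraMap (fg_tensorIdeal_bot hm) hcomap
  refine ⟨σ', fun n x t hx ↦ ?_⟩
  have hmem := map_mem_map_algebraMap_pow hcomap.ge hσ' hx
  rw [map_sub] at hmem
  exact (congrArg (_ - · ∈ _) (RingHom.congr_fun hσ' t)).mp hmem

lemma exists_finiteDimensional_comap_eq [Algebra.IsAlgebraic k Ω]
    [IsLocalRing (BaseChangeCompletion k Ω m)] [IsNoetherianRing (BaseChangeCompletion k Ω m)]
    (hmax : IsLocalRing.maximalIdeal (BaseChangeCompletion k Ω m) = baseChangeIdeal k Ω m)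
    (hm : m.FG) {P : Ideal (BaseChangeCompletion k Ω m)}
    (hP : P ∈ minimalPrimes (BaseChangeCompletion k Ω m)) :
    ∃ E : IntermediateField k Ω, FiniteDimensional k E ∧ ∀ (σ : Ω ≃ₐ[E] Ω) σ',
      IsCompletedAut (m := m) (σ.restrictScalars k) σ' →
        P.comap (σ' : BaseChangeCompletion k Ω m →+* _) = P := by
  obtain ⟨u, N, hu⟩ := exists_comap_eq_of_sub_mem_pow hP
  rw [hmax] at hu
  obtain ⟨t, ht⟩ := exists_sub_algebraMap_mem_pow (fg_tensorIdeal_bot hm) u N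
  obtain ⟨s, hs⟩ := exists_finset_forall_rTensor_eq t
  refine ⟨IntermediateField.adjoin k s, IntermediateField.finiteDimensional_adjoin
    fun x _ ↦ Algebra.IsIntegral.isIntegral x, fun σ σ' hσ' ↦ hu σ' ?_⟩
  have hfix : baseChangeAut A (σ.restrictScalars k) t = t := by
    refine (hs (σ.restrictScalars k).toLinearMap LinearMap.id fun x hx ↦ ?_).trans
      (LinearMap.rTensor_id_apply _ _ t)
    exact σ.commutes ⟨x, IntermediateField.subset_adjoin k _ hx⟩
  have hσt := hσ' N u t ht
  rw [hfix] at hσt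
  rw [← sub_sub_sub_cancel_right _ _ (algebraMap _ _ t)]
  exact sub_mem hσt ht

/-- On a finite subextension `l` is a combination of Galois conjugations, and these all preserve
`P`. -/
lemma IsExtendedValue.algebraMap_mem [PerfectField k₁] [IsAlgClosed Ω] [Algebra.IsAlgebraic k₁ Ω]
    [IsLocalRing (BaseChangeCompletion k Ω m)] [IsNoetherianRing (BaseChangeCompletion k Ω m)]
    (hmax : IsLocalRing.maximalIdeal (BaseChangeCompletion k Ω m) = baseChangeIdeal k Ω m)
    (hm : m.FG) {P : Ideal (BaseChangeCompletion k Ω m)}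
    (hP : ∀ (σ : Ω ≃ₐ[k₁] Ω) σ', IsCompletedAut (m := m) (σ.restrictScalars k) σ' →
      P.comap (σ' : BaseChangeCompletion k Ω m →+* _) = P)
    {x : BaseChangeCompletion k Ω m} (hx : x ∈ P) {l : Ω →ₗ[k₁] k₁} {b : k₁ ⊗[k] A}
    (hb : IsExtendedValue l x b) : algebraMap _ _ (baseChangeIncl k k₁ Ω A b) ∈ P := by
  refine mem_of_forall_mem_sup_pow fun n ↦ ?_
  rw [hmax]
  obtain ⟨t, ht⟩ := exists_sub_algebraMap_mem_pow (fg_tensorIdeal_bot hm) x n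
  obtain ⟨c, hc⟩ := exists_algebraMap_rTensor_eq_sum l t
  have hlt : algebraMap _ _ (baseChangeIncl k k₁ Ω A
      (LinearMap.rTensor A (l.restrictScalars k) t)) ∈ P ⊔ baseChangeIdeal k Ω m ^ n := by
    rw [hc, Finsupp.sum, map_sum]
    refine Ideal.sum_mem _ fun τ _ ↦ ?_
    obtain ⟨τ', hτ'⟩ := exists_isCompletedAut hm (τ.restrictScalars k)
    rw [map_mul]
    refine Ideal.mul_mem_left _ _ ?_
    rw [← sub_sub_cancel (τ' x) (algebraMap _ _ (baseChangeAut A _ t))]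
    exact sub_mem (Ideal.mem_sup_left ((hP τ τ' hτ').ge hx)) (Ideal.mem_sup_right (hτ' n x t ht))
  have hbt : algebraMap _ (BaseChangeCompletion k Ω m) (baseChangeIncl k k₁ Ω A
      (LinearMap.rTensor A (l.restrictScalars k) t - b)) ∈ baseChangeIdeal k Ω m ^ n :=
    (algebraMap_mem_baseChangeIdeal_pow hm).2
      (rTensor_mem_tensorIdeal_bot (IsScalarTower.toAlgHom k k₁ Ω).toLinearMap (hb n t ht))
  rw [map_sub, map_sub] at hbt
  rw [← sub_sub_cancel (algebraMap _ _ (baseChangeIncl k k₁ Ω A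
    (LinearMap.rTensor A (l.restrictScalars k) t))) (algebraMap _ _ _)]
  exact sub_mem hlt (Ideal.mem_sup_right hbt)

end GaloisDescent

section CompletedBaseChangeDomain

variable {k Ω A : Type*} [Field k] [PerfectField k] [Field Ω] [Algebra k Ω] [CommRing A]
  [Algebra k A] {m : Ideal A}

lemma isDomain_tensorProduct_of_isAlgebraic [Algebra.IsAlgebraic k Ω] [IsDomain A]
    [IsIntegrallyClosedIn k (FractionRing A)] : IsDomain (Ω ⊗[k] A) := by
  have := (isField_tensorProduct_of_isAlgebraic (k := k) (F := FractionRing A) Ω).isDomain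
  have := (Algebra.TensorProduct.comm k Ω (FractionRing A)).toMulEquiv.isDomain _
  let g := Algebra.TensorProduct.map (AlgHom.id k Ω) (IsScalarTower.toAlgHom k A (FractionRing A))
  have hg : Function.Injective g :=
    Module.Flat.lTensor_preserves_injective_linearMap
      (IsScalarTower.toAlgHom k A (FractionRing A)).toLinearMap
      (IsFractionRing.injective A (FractionRing A))
  exact hg.isDomain g.toRingHom

theorem isDomain_baseChangeCompletion [IsAlgClosed Ω] [Algebra.IsAlgebraic k Ω] [IsDomain A]
    [IsIntegrallyClosedIn k (FractionRing A)] [IsAdicComplete m A] (hm : m.FG)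
    (h : IsField (Ω ⊗[k] (A ⧸ m))) : IsDomain (BaseChangeCompletion k Ω m) := by
  have hI := fg_tensorIdeal_bot (k := k) (Ω := Ω) hm
  have := isMaximal_tensorIdeal_bot h
  have := isLocalRing_adicCompletion hI
  have := isNoetherianRing_adicCompletion hI
  have hmax := maximalIdeal_adicCompletion hI
  obtain ⟨P, hP, -⟩ := Ideal.exists_minimalPrimes_le
    (bot_le (a := IsLocalRing.maximalIdeal (BaseChangeCompletion k Ω m)))
  have hprime : P.IsPrime := hP.1.1
  suffices hbot : P = ⊥ by
    subst hbot
    exact IsDomain.of_bot_isPrime _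
  by_contra hne
  obtain ⟨x, hx, hx0⟩ := Submodule.exists_mem_ne_zero_of_ne_bot hne
  obtain ⟨E, hE, hPE⟩ := exists_finiteDimensional_comap_eq hmax hm hP
  have := Algebra.IsAlgebraic.perfectField (K := k) (L := E)
  have : Algebra.IsAlgebraic E Ω := Algebra.IsAlgebraic.tower_top (K := k) E
  have : IsDomain (E ⊗[k] A) := isDomain_tensorProduct_of_isAlgebraic
  obtain ⟨l, b, hb, hlb⟩ := exists_isExtendedValue_ne_zero E hm hx0
  exact Set.disjoint_left.1 (Ideal.disjoint_nonZeroDivisors_of_mem_minimalPrimes hP)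
    (hlb.algebraMap_mem hmax hm hPE hx) (baseChangeIncl_mem_nonZeroDivisors hm hb)

end CompletedBaseChangeDomain

section TwoFieldDescent

variable {k k₁ k₂ : Type*} [Field k] [Field k₁] [Field k₂] [Algebra k k₁] [Algebra k k₂]

lemma exists_tensorProductMap_ne_zero {X Y : Type*} [AddCommGroup X] [Module k X] [Module k₁ X]
    [IsScalarTower k k₁ X] [AddCommGroup Y] [Module k Y] [Module k₂ Y] [IsScalarTower k k₂ Y]
    {z : X ⊗[k] Y} (hz : z ≠ 0) : ∃ (φ : X →ₗ[k₁] k₁) (χ : Y →ₗ[k₂] k₂),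
      TensorProduct.map (φ.restrictScalars k) (χ.restrictScalars k) z ≠ 0 := by
  obtain ⟨φ, hφ⟩ := exists_rTensor_ne_zero k k₁ hz
  obtain ⟨χ, hχ⟩ := exists_rTensor_ne_zero k k₂
    ((TensorProduct.comm k k₁ Y).map_ne_zero_iff.2 hφ)
  refine ⟨φ, χ, fun h ↦ hχ ?_⟩
  rw [← LinearMap.lTensor_comp_rTensor, LinearMap.comp_apply] at h
  rw [← LinearMap.comm_comp_lTensor_comp_comm_eq]
  simp [h]

variable {Ω : Type*} [Field Ω] [Algebra k Ω] [Algebra k₁ Ω] [Algebra k₂ Ω] [IsScalarTower k k₁ Ω]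
  [IsScalarTower k k₂ Ω]

/-- The canonical map `A ⊗[k] B → (Ω ⊗[k₁] A) ⊗[Ω] (Ω ⊗[k₂] B)` for a `k₁`-algebra `A` and a
`k₂`-algebra `B`, where `Ω` is an extension of both `k₁` and `k₂`. -/
noncomputable def tensorBaseChange (k k₁ k₂ Ω A B : Type*) [Field k] [Field k₁] [Field k₂] [Field Ω]
    [Algebra k k₁] [Algebra k k₂] [Algebra k Ω] [Algebra k₁ Ω] [Algebra k₂ Ω]
    [IsScalarTower k k₁ Ω] [IsScalarTower k k₂ Ω] [CommRing A] [Algebra k A] [Algebra k₁ A]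
    [IsScalarTower k k₁ A] [CommRing B] [Algebra k B] [Algebra k₂ B] [IsScalarTower k k₂ B] :
    A ⊗[k] B →ₐ[k] (Ω ⊗[k₁] A) ⊗[Ω] (Ω ⊗[k₂] B) :=
  Algebra.TensorProduct.lift
    (((Algebra.TensorProduct.includeLeft :
        Ω ⊗[k₁] A →ₐ[Ω] (Ω ⊗[k₁] A) ⊗[Ω] (Ω ⊗[k₂] B)).restrictScalars k).comp
      ((Algebra.TensorProduct.includeRight : A →ₐ[k₁] Ω ⊗[k₁] A).restrictScalars k))
    (((Algebra.TensorProduct.includeRight :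
        Ω ⊗[k₂] B →ₐ[Ω] (Ω ⊗[k₁] A) ⊗[Ω] (Ω ⊗[k₂] B)).restrictScalars k).comp
      ((Algebra.TensorProduct.includeRight : B →ₐ[k₂] Ω ⊗[k₂] B).restrictScalars k))
    fun _ _ ↦ Commute.all _ _

variable {A B : Type*} [CommRing A] [Algebra k A] [Algebra k₁ A] [IsScalarTower k k₁ A]
  [CommRing B] [Algebra k B] [Algebra k₂ B] [IsScalarTower k k₂ B]

@[simp] lemma tensorBaseChange_tmul (a : A) (b : B) :
    tensorBaseChange k k₁ k₂ Ω A B (a ⊗ₜ b) = (1 ⊗ₜ a) ⊗ₜ (1 ⊗ₜ b) := by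
  simp [tensorBaseChange]

lemma tensorBaseChange_injective
    (hΩ : Function.Injective (Algebra.TensorProduct.productMap (IsScalarTower.toAlgHom k k₁ Ω)
      (IsScalarTower.toAlgHom k k₂ Ω))) :
    Function.Injective (tensorBaseChange k k₁ k₂ Ω A B) := by
  refine (injective_iff_map_eq_zero _).2 fun z hz ↦ ?_
  by_contra hne
  obtain ⟨φ, χ, h⟩ := exists_tensorProductMap_ne_zero (k₁ := k₁) (k₂ := k₂) hne
  let Θ : (Ω ⊗[k₁] A) ⊗[Ω] (Ω ⊗[k₂] B) →ₗ[Ω] Ω := (TensorProduct.lid Ω Ω).toLinearMap ∘ₗ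
    TensorProduct.map ((TensorProduct.AlgebraTensorModule.rid k₁ Ω Ω).toLinearMap ∘ₗ φ.baseChange Ω)
      ((TensorProduct.AlgebraTensorModule.rid k₂ Ω Ω).toLinearMap ∘ₗ χ.baseChange Ω)
  have hΘ (w : A ⊗[k] B) : Θ (tensorBaseChange k k₁ k₂ Ω A B w) =
      Algebra.TensorProduct.productMap (IsScalarTower.toAlgHom k k₁ Ω)
        (IsScalarTower.toAlgHom k k₂ Ω)
        (TensorProduct.map (φ.restrictScalars k) (χ.restrictScalars k) w) := by
    induction w with
    | zero => simp
    | add x y hx hy => simp only [map_add, hx, hy]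
    | tmul x y => simp [Θ, Algebra.smul_def]
  refine h (hΩ ?_)
  rw [← hΘ, hz, map_zero, map_zero]

lemma comap_tensorBaseChange_tensorIdeal
    (hΩ : Function.Injective (Algebra.TensorProduct.productMap (IsScalarTower.toAlgHom k k₁ Ω)
      (IsScalarTower.toAlgHom k k₂ Ω))) (J : Ideal A) (K : Ideal B) :
    (tensorIdeal Ω (tensorIdeal k₁ (⊥ : Ideal Ω) J) (tensorIdeal k₂ (⊥ : Ideal Ω) K)).comap
      (tensorBaseChange k k₁ k₂ Ω A B) = tensorIdeal k J K := by
  let qA : Ω ⊗[k₁] A →ₐ[Ω] Ω ⊗[k₁] (A ⧸ J) :=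
    Algebra.TensorProduct.map (AlgHom.id Ω Ω) (Ideal.Quotient.mkₐ k₁ J)
  let qB : Ω ⊗[k₂] B →ₐ[Ω] Ω ⊗[k₂] (B ⧸ K) :=
    Algebra.TensorProduct.map (AlgHom.id Ω Ω) (Ideal.Quotient.mkₐ k₂ K)
  have hqA : (⊥ : Ideal (Ω ⊗[k₁] (A ⧸ J))).comap qA = tensorIdeal k₁ ⊥ J := by
    rw [← ker_map_id_mk J]
    rfl
  have hqB : (⊥ : Ideal (Ω ⊗[k₂] (B ⧸ K))).comap qB = tensorIdeal k₂ ⊥ K := by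
    rw [← ker_map_id_mk K]
    rfl
  have hcomm : ((Algebra.TensorProduct.map qA qB).restrictScalars k).comp
      (tensorBaseChange k k₁ k₂ Ω A B) = (tensorBaseChange k k₁ k₂ Ω (A ⧸ J) (B ⧸ K)).comp
        (Algebra.TensorProduct.map (Ideal.Quotient.mkₐ k J) (Ideal.Quotient.mkₐ k K)) := by
    ext x <;> simp [qA, qB]
  have hbot : tensorIdeal Ω (⊥ : Ideal (Ω ⊗[k₁] (A ⧸ J))) (⊥ : Ideal (Ω ⊗[k₂] (B ⧸ K))) = ⊥ := by
    simp [tensorIdeal]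
  ext z
  rw [← hqA, ← hqB, ← comap_map_tensorIdeal, hbot, Ideal.mem_comap, Ideal.mem_comap,
    tensorIdeal_eq_ker, RingHom.mem_ker, Ideal.mem_bot,
    ← map_eq_zero_iff _ (tensorBaseChange_injective hΩ)]
  exact iff_of_eq (congr_arg (· = 0) (DFunLike.congr_fun hcomm z))

lemma comap_baseChangeIdeal_pow (k Ω : Type*) {A : Type*} [Field k] [Field Ω] [CommRing A]
    [Algebra k Ω] [Algebra k A] {m : Ideal A} (hm : m.FG) (n : ℕ) :
    (baseChangeIdeal k Ω m ^ n).comap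
      (IsScalarTower.toAlgHom Ω (Ω ⊗[k] A) (BaseChangeCompletion k Ω m)) =
        tensorIdeal k ⊥ (m ^ n) :=
  Ideal.ext fun _ ↦ algebraMap_mem_baseChangeIdeal_pow hm

lemma noZeroDivisorsAlong_tensorIdeal_of_baseChange {mA : Ideal A} {mB : Ideal B} (hA : mA.FG)
    (hB : mB.FG)
    (hΩ : Function.Injective (Algebra.TensorProduct.productMap (IsScalarTower.toAlgHom k k₁ Ω)
      (IsScalarTower.toAlgHom k k₂ Ω)))
    (h : NoZeroDivisorsAlong fun n ↦
      tensorIdeal Ω (baseChangeIdeal k₁ Ω mA ^ n) (baseChangeIdeal k₂ Ω mB ^ n)) :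
    NoZeroDivisorsAlong fun n ↦ tensorIdeal k (mA ^ n) (mB ^ n) := by
  have h' := h.comap (Algebra.TensorProduct.map
    (IsScalarTower.toAlgHom Ω (Ω ⊗[k₁] A) (BaseChangeCompletion k₁ Ω mA))
    (IsScalarTower.toAlgHom Ω (Ω ⊗[k₂] B) (BaseChangeCompletion k₂ Ω mB))).toRingHom
  convert h'.comap (tensorBaseChange k k₁ k₂ Ω A B).toRingHom using 2 with n
  rw [← comap_tensorBaseChange_tensorIdeal hΩ, ← comap_baseChangeIdeal_pow k₁ Ω hA,
    ← comap_baseChangeIdeal_pow k₂ Ω hB, ← comap_map_tensorIdeal]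
  rfl

lemma noZeroDivisorsAlong_tensorIdeal_adicCompletion [IsAlgClosed Ω] {T T' : Type*} [CommRing T]
    [CommRing T'] [Algebra Ω T] [Algebra Ω T'] {I : Ideal T} {I' : Ideal T'} [I.IsMaximal]
    [I'.IsMaximal] (hI : I.FG) (hI' : I'.FG) [IsDomain (AdicCompletion I T)]
    [IsDomain (AdicCompletion I' T')] :
    NoZeroDivisorsAlong fun n ↦ tensorIdeal Ω (I.map (algebraMap T (AdicCompletion I T)) ^ n)
      (I'.map (algebraMap T' (AdicCompletion I' T')) ^ n) := by
  have := isLocalRing_adicCompletion hI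
  have := isLocalRing_adicCompletion hI'
  have := isNoetherianRing_adicCompletion hI
  have := isNoetherianRing_adicCompletion hI'
  have := AdicCompletion.isAdicComplete_self I hI
  have := AdicCompletion.isAdicComplete_self I' hI'
  rw [← maximalIdeal_adicCompletion hI] at *
  rw [← maximalIdeal_adicCompletion hI'] at *
  exact noZeroDivisorsAlong_tensorIdeal

lemma isField_tensorProduct_quotient [PerfectField k] [Algebra.IsAlgebraic k Ω] (m : Ideal A)
    [m.IsMaximal] [IsIntegrallyClosedIn k (A ⧸ m)] : IsField (Ω ⊗[k] (A ⧸ m)) :=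
  let := Ideal.Quotient.field m
  (Algebra.TensorProduct.comm k Ω (A ⧸ m)).toMulEquiv.isField
    (isField_tensorProduct_of_isAlgebraic Ω)

theorem noZeroDivisorsAlong_tensorIdeal_of_isIntegrallyClosedIn [PerfectField k₁] [PerfectField k₂]
    [IsAlgClosed Ω] [Algebra.IsAlgebraic k₁ Ω] [Algebra.IsAlgebraic k₂ Ω] [IsDomain A] [IsDomain B]
    {mA : Ideal A} {mB : Ideal B} [mA.IsMaximal] [mB.IsMaximal] [IsAdicComplete mA A]
    [IsAdicComplete mB B] (hA : mA.FG) (hB : mB.FG)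
    [IsIntegrallyClosedIn k₁ (FractionRing A)] [IsIntegrallyClosedIn k₂ (FractionRing B)]
    [IsIntegrallyClosedIn k₁ (A ⧸ mA)] [IsIntegrallyClosedIn k₂ (B ⧸ mB)]
    (hΩ : Function.Injective (Algebra.TensorProduct.productMap (IsScalarTower.toAlgHom k k₁ Ω)
      (IsScalarTower.toAlgHom k k₂ Ω))) :
    NoZeroDivisorsAlong fun n ↦ tensorIdeal k (mA ^ n) (mB ^ n) := by
  have hΩA : IsField (Ω ⊗[k₁] (A ⧸ mA)) := isField_tensorProduct_quotient mA
  have hΩB : IsField (Ω ⊗[k₂] (B ⧸ mB)) := isField_tensorProduct_quotient mB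
  have := isMaximal_tensorIdeal_bot hΩA
  have := isMaximal_tensorIdeal_bot hΩB
  have := isDomain_baseChangeCompletion hA hΩA
  have := isDomain_baseChangeCompletion hB hΩB
  exact noZeroDivisorsAlong_tensorIdeal_of_baseChange hA hB hΩ
    (noZeroDivisorsAlong_tensorIdeal_adicCompletion (fg_tensorIdeal_bot hA) (fg_tensorIdeal_bot hB))

end TwoFieldDescent

section Connectedness

lemma connectedSpace_primeSpectrum_of_injective {R S : Type*} [CommRing R] [CommRing S]
    (f : R →+* S) (hf : Function.Injective f) [ConnectedSpace (PrimeSpectrum S)] :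
    ConnectedSpace (PrimeSpectrum R) := by
  have hdense : DenseRange (PrimeSpectrum.comap f) := by
    rw [PrimeSpectrum.denseRange_comap_iff_ker_le_nilRadical,
      (RingHom.injective_iff_ker_eq_bot f).1 hf]
    exact bot_le
  have := hdense.preconnectedSpace (PrimeSpectrum.continuous_comap f)
  exact { toNonempty := .map (PrimeSpectrum.comap f) inferInstance }

lemma connectedSpace_primeSpectrum_of_forall_isIdempotentElem {R : Type*} [CommRing R]
    [Nontrivial R] (h : ∀ e : R, IsIdempotentElem e → e = 0 ∨ e = 1) :
    ConnectedSpace (PrimeSpectrum R) := by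
  refine connectedSpace_iff_clopen.2 ⟨inferInstance, fun s hs ↦ ?_⟩
  obtain ⟨e, he, rfl⟩ := PrimeSpectrum.isClopen_iff.1 hs
  rcases h e he with rfl | rfl <;> simp

lemma isField_of_connectedSpace_primeSpectrum {k R : Type*} [Field k] [CommRing R] [Algebra k R]
    [Algebra.IsIntegral k R] [IsReduced R] [ConnectedSpace (PrimeSpectrum R)] : IsField R := by
  have : Nontrivial R := PrimeSpectrum.nonempty_iff_nontrivial.1 inferInstance
  refine ⟨exists_pair_ne _, mul_comm, fun {z} hz ↦ ?_⟩
  let kz := Algebra.adjoin k {z}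
  have : Module.Finite k kz := Module.Finite.iff_fg.2
    (Algebra.IsIntegral.isIntegral (R := k) z).fg_adjoin_singleton
  have : IsArtinianRing kz := .of_finite k kz
  have : IsReduced kz := isReduced_of_injective kz.val Subtype.val_injective
  have : ConnectedSpace (PrimeSpectrum kz) :=
    connectedSpace_primeSpectrum_of_injective kz.val.toRingHom Subtype.val_injective
  have hkz : IsField kz :=
    PrimeSpectrum.subsingleton_iff_isField_of_isReduced.1 PreconnectedSpace.trivial_of_discrete
  obtain ⟨w, hw⟩ := hkz.mul_inv_cancel (a := ⟨z, Algebra.self_mem_adjoin_singleton k z⟩)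
    fun h ↦ hz (congrArg Subtype.val h)
  exact ⟨w, congrArg Subtype.val hw⟩

variable {k k₁ k₂ : Type*} [Field k] [PerfectField k] [Field k₁] [Field k₂] [Algebra k k₁]
  [Algebra k k₂] [Algebra.IsAlgebraic k k₂]

lemma isReduced_tensorProduct_of_perfectField : IsReduced (k₁ ⊗[k] k₂) := by
  refine ⟨fun z hz ↦ ?_⟩
  obtain ⟨E, _, w, rfl⟩ := exists_finiteDimensional_mem_range_map_val z
  have hinj : Function.Injective
      (Algebra.TensorProduct.map (AlgHom.id k k₁) E.toSubalgebra.val) :=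
    Module.Flat.lTensor_preserves_injective_linearMap E.toSubalgebra.val.toLinearMap
      Subtype.val_injective
  have : Algebra.FormallyUnramified k E := .of_isSeparable k E
  have : IsReduced (k₁ ⊗[k] E) := Algebra.FormallyUnramified.isReduced_of_field k₁ (k₁ ⊗[k] E)
  have hw : IsNilpotent w := (IsNilpotent.map_iff hinj).1 hz
  exact (congrArg _ hw.eq_zero).trans (map_zero _)

lemma isField_tensorProduct_of_connectedSpace {KA KB : Type*} [CommRing KA] [CommRing KB]
    [Algebra k KA] [Algebra k KB] [Algebra k₁ KA] [Algebra k₂ KB] [IsScalarTower k k₁ KA]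
    [IsScalarTower k k₂ KB] [Nontrivial KA] [Nontrivial KB]
    [ConnectedSpace (PrimeSpectrum (KA ⊗[k] KB))] : IsField (k₁ ⊗[k] k₂) := by
  have : IsReduced (k₁ ⊗[k] k₂) := isReduced_tensorProduct_of_perfectField
  have hinj : Function.Injective (Algebra.TensorProduct.map (IsScalarTower.toAlgHom k k₁ KA)
      (IsScalarTower.toAlgHom k k₂ KB)) :=
    TensorProduct.map_injective_of_flat_flat (IsScalarTower.toAlgHom k k₁ KA).toLinearMap
      (IsScalarTower.toAlgHom k k₂ KB).toLinearMap (algebraMap k₁ KA).injective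
      (algebraMap k₂ KB).injective
  have : ConnectedSpace (PrimeSpectrum (k₁ ⊗[k] k₂)) :=
    connectedSpace_primeSpectrum_of_injective (Algebra.TensorProduct.map
      (IsScalarTower.toAlgHom k k₁ KA) (IsScalarTower.toAlgHom k k₂ KB)).toRingHom hinj
  exact isField_of_connectedSpace_primeSpectrum (k := k₁)

end Connectedness

section Hensel

variable {R A : Type*} [CommRing R] [CommRing A] [Algebra R A] {m : Ideal A}

lemma exists_aeval_eq_zero_of_separable [HenselianRing A m] {p : Polynomial R} (hp : p.Monic)
    (hsep : p.Separable) {x : A ⧸ m} (hx : Polynomial.aeval x p = 0) :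
    ∃ a : A, Polynomial.aeval a p = 0 ∧ Ideal.Quotient.mk m a = x := by
  obtain ⟨a₀, rfl⟩ := Ideal.Quotient.mk_surjective x
  have hmk (q : Polynomial R) : Ideal.Quotient.mk m ((q.map (algebraMap R A)).eval a₀) =
      Polynomial.aeval (Ideal.Quotient.mk m a₀) q := by
    rw [Polynomial.eval_map_algebraMap]
    exact (Polynomial.aeval_algHom_apply (Ideal.Quotient.mkₐ R m) a₀ q).symm
  obtain ⟨a, ha, haa₀⟩ := HenselianRing.is_henselian (I := m) (p.map (algebraMap R A)) (hp.map _) a₀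
    (Ideal.Quotient.eq_zero_iff_mem.1 ((hmk p).trans hx)) (by
      rw [Polynomial.derivative_map, hmk]
      obtain ⟨u, v, huv⟩ := hsep
      exact .of_mul_eq_one_right (Polynomial.aeval (Ideal.Quotient.mk m a₀) v)
        (by simpa [hx] using congrArg (Polynomial.aeval (Ideal.Quotient.mk m a₀)) huv))
  exact ⟨a, by rwa [Polynomial.IsRoot, Polynomial.eval_map_algebraMap] at ha,
    Ideal.Quotient.eq.2 haa₀⟩

lemma isIntegrallyClosedIn_quotient {k₁ : Type*} [Field k₁] [PerfectField k₁] [Algebra k₁ A]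
    [m.IsPrime] [HenselianRing A m] [IsIntegrallyClosedIn k₁ A] :
    IsIntegrallyClosedIn k₁ (A ⧸ m) := by
  refine isIntegrallyClosedIn_iff.2 ⟨(algebraMap k₁ (A ⧸ m)).injective, fun {x} hx ↦ ?_⟩
  obtain ⟨a, ha, rfl⟩ := exists_aeval_eq_zero_of_separable (minpoly.monic hx)
    (PerfectField.separable_of_irreducible (minpoly.irreducible hx)) (minpoly.aeval k₁ x)
  obtain ⟨c, rfl⟩ := (isIntegrallyClosedIn_iff.1 ‹IsIntegrallyClosedIn k₁ A›).2
    ⟨_, minpoly.monic hx, ha⟩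
  exact ⟨c, rfl⟩

lemma exists_isIdempotentElem_of_henselianRing [HenselianRing A m] {e : A ⧸ m}
    (he : IsIdempotentElem e) : ∃ a : A, IsIdempotentElem a ∧ Ideal.Quotient.mk m a = e := by
  have hmonic : (Polynomial.X ^ 2 - Polynomial.X : Polynomial ℤ).Monic := by monicity!
  have hsep : (Polynomial.X ^ 2 - Polynomial.X : Polynomial ℤ).Separable :=
    ⟨-4, 2 * Polynomial.X - 1, by simp; ring⟩
  obtain ⟨a, ha, hae⟩ := exists_aeval_eq_zero_of_separable hmonic hsep (x := e) (by
    simp [sq, he.eq])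
  exact ⟨a, by simpa [sq, sub_eq_zero, IsIdempotentElem] using ha, hae⟩

lemma connectedSpace_primeSpectrum_quotient [IsDomain A] [HenselianRing A m] :
    ConnectedSpace (PrimeSpectrum (A ⧸ m)) := by
  have : Nontrivial (A ⧸ m) := Ideal.Quotient.nontrivial_iff.2 fun h ↦
    bot_ne_top (Ideal.jacobson_eq_top_iff.1 (top_le_iff.1 (h.ge.trans HenselianRing.jac)))
  refine connectedSpace_primeSpectrum_of_forall_isIdempotentElem fun e he ↦ ?_
  obtain ⟨a, ha, rfl⟩ := exists_isIdempotentElem_of_henselianRing he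
  rcases IsIdempotentElem.iff_eq_zero_or_one.1 ha with rfl | rfl <;> simp

end Hensel

section Completion

variable {C : Type*} [CommRing C] {r : Ideal C}

lemma connectedSpace_primeSpectrum_quotient_of_isDomain_adicCompletion (hr : r.FG)
    [IsDomain (AdicCompletion r C)] : ConnectedSpace (PrimeSpectrum (C ⧸ r)) := by
  have := AdicCompletion.isAdicComplete_self r hr
  have hcomap : (r.map (algebraMap C (AdicCompletion r C))).comap (algebraMap C _) = r := by
    simpa using comap_algebraMap_map_pow hr 1
  have := connectedSpace_primeSpectrum_quotient (m := r.map (algebraMap C (AdicCompletion r C)))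
  exact connectedSpace_primeSpectrum_of_injective _
    (Ideal.quotientMap_injective' (H := hcomap.ge) hcomap.le)

/-- Passing to the subsequence `f (2n)` turns `r`-adic representatives into Cauchy sequences for
`F`. -/
theorem isDomain_adicCompletion_of_noZeroDivisorsAlong {F : ℕ → Ideal C} (hr : r ≠ ⊤)
    (hF : NoZeroDivisorsAlong F) (hle : ∀ n, F n ≤ r ^ n) (hge : ∀ n, r ^ (n + n) ≤ F n) :
    IsDomain (AdicCompletion r C) := by
  have : Nontrivial (AdicCompletion r C) := by
    have : Nontrivial (C ⧸ r) := Ideal.Quotient.nontrivial_iff.2 hr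
    exact (AdicCompletion.evalOneₐ r).toRingHom.domain_nontrivial
  have hsub (f : AdicCompletion.AdicCauchySequence r C) {m n : ℕ} (h : m ≤ n) :
      f n - f m ∈ r ^ m := by
    simpa using SModEq.sub_mem.1 (f.2 h).symm
  have hcauchy (f : AdicCompletion.AdicCauchySequence r C) : IsCauchyAlong F fun n ↦ f (n + n) :=
    fun n ↦ hge n (hsub f (by lia))
  have hzero {f : AdicCompletion.AdicCauchySequence r C} (hf : IsNullAlong F fun n ↦ f (n + n)) :
      AdicCompletion.mk r C f = 0 := by
    refine AdicCompletion.ext_evalₐ fun n ↦ ?_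
    rw [map_zero, AdicCompletion.evalₐ_mk, Ideal.Quotient.eq_zero_iff_mem]
    simpa using sub_mem (hle n (hf n)) (hsub f (n.le_add_left n))
  have : NoZeroDivisors (AdicCompletion r C) := by
    refine ⟨fun {x y} hxy ↦ ?_⟩
    obtain ⟨f, rfl⟩ := AdicCompletion.mk_surjective r C x
    obtain ⟨g, rfl⟩ := AdicCompletion.mk_surjective r C y
    refine (hF _ _ (hcauchy f) (hcauchy g) fun n ↦ hge n ?_).imp hzero hzero
    have h := congrArg (AdicCompletion.evalₐ r (n + n)) hxy
    rwa [map_mul, map_zero, AdicCompletion.evalₐ_mk, AdicCompletion.evalₐ_mk, ← map_mul,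
      Ideal.Quotient.eq_zero_iff_mem] at h
  exact NoZeroDivisors.to_isDomain _

end Completion

section CompletedTensor

variable {k A B : Type*} [Field k] [CommRing A] [CommRing B] [Algebra k A] [Algebra k B]

lemma tensorRadical_eq_tensorIdeal [IsLocalRing A] [IsLocalRing B] : tensorRadical k A B =
    tensorIdeal k (IsLocalRing.maximalIdeal A) (IsLocalRing.maximalIdeal B) := by
  simp only [tensorRadical, tensorIdeal, IsLocalRing.jacobson_eq_maximalIdeal _ bot_ne_top]

lemma tensorIdeal_pow_le (I : Ideal A) (K : Ideal B) (n : ℕ) :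
    tensorIdeal k (I ^ n) (K ^ n) ≤ tensorIdeal k I K ^ n := by
  rw [tensorIdeal, tensorIdeal, Ideal.map_pow, Ideal.map_pow]
  exact sup_le (Ideal.pow_right_mono le_sup_left n) (Ideal.pow_right_mono le_sup_right n)

lemma pow_add_self_le_tensorIdeal_pow (I : Ideal A) (K : Ideal B) (n : ℕ) :
    tensorIdeal k I K ^ (n + n) ≤ tensorIdeal k (I ^ n) (K ^ n) := by
  rw [tensorIdeal, tensorIdeal, Ideal.map_pow, Ideal.map_pow]
  exact Ideal.sup_pow_add_le_pow_sup_pow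

lemma tensorIdeal_ne_top {I : Ideal A} {K : Ideal B} (hI : I ≠ ⊤) (hK : K ≠ ⊤) :
    tensorIdeal k I K ≠ ⊤ := by
  have := Ideal.Quotient.nontrivial_iff.2 hI
  have := Ideal.Quotient.nontrivial_iff.2 hK
  rw [tensorIdeal_eq_ker]
  exact RingHom.ker_ne_top _

lemma connectedSpace_primeSpectrum_tensorProduct_quotient {I : Ideal A} {K : Ideal B} (hI : I.FG)
    (hK : K.FG) [IsDomain (AdicCompletion (tensorIdeal k I K) (A ⊗[k] B))] :
    ConnectedSpace (PrimeSpectrum ((A ⧸ I) ⊗[k] (B ⧸ K))) := by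
  have := connectedSpace_primeSpectrum_quotient_of_isDomain_adicCompletion
    (r := tensorIdeal k I K) (Submodule.FG.sup (Ideal.FG.map hI _) (Ideal.FG.map hK _))
  have hsurj : Function.Surjective
      (Algebra.TensorProduct.map (Ideal.Quotient.mkₐ k I) (Ideal.Quotient.mkₐ k K)) :=
    TensorProduct.map_surjective (Ideal.Quotient.mkₐ_surjective k I)
      (Ideal.Quotient.mkₐ_surjective k K)
  let e := (Ideal.quotEquivOfEq (tensorIdeal_eq_ker I K)).trans
    (RingHom.quotientKerEquivOfSurjective hsurj)
  exact connectedSpace_primeSpectrum_of_injective (S := A ⊗[k] B ⧸ tensorIdeal k I K)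
    e.symm.toRingHom e.symm.injective

lemma noZeroDivisorsAlong_tensorIdeal_of_isField {k₁ k₂ : Type*} [Field k₁] [Field k₂]
    [PerfectField k] [Algebra k k₁] [Algebra k k₂] [Algebra.IsAlgebraic k k₁]
    [Algebra.IsAlgebraic k k₂]
    [Algebra k₁ A] [IsScalarTower k k₁ A] [Algebra k₂ B] [IsScalarTower k k₂ B]
    [IsDomain A] [IsDomain B] [IsIntegrallyClosed A] [IsIntegrallyClosed B]
    [IsIntegrallyClosedIn k₁ A] [IsIntegrallyClosedIn k₂ B]
    {mA : Ideal A} {mB : Ideal B} [mA.IsMaximal] [mB.IsMaximal]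
    [IsAdicComplete mA A] [IsAdicComplete mB B] (hA : mA.FG) (hB : mB.FG)
    (hk : IsField (k₁ ⊗[k] k₂)) :
    NoZeroDivisorsAlong fun n ↦ tensorIdeal k (mA ^ n) (mB ^ n) := by
  let Ω := AlgebraicClosure k
  let : Algebra k₁ Ω := (IsAlgClosed.lift : k₁ →ₐ[k] Ω).toRingHom.toAlgebra
  let : Algebra k₂ Ω := (IsAlgClosed.lift : k₂ →ₐ[k] Ω).toRingHom.toAlgebra
  have : IsScalarTower k k₁ Ω := .of_algebraMap_eq' (AlgHom.comp_algebraMap _).symm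
  have : IsScalarTower k k₂ Ω := .of_algebraMap_eq' (AlgHom.comp_algebraMap _).symm
  have : Algebra.IsAlgebraic k₁ Ω := .tower_top (K := k) k₁
  have : Algebra.IsAlgebraic k₂ Ω := .tower_top (K := k) k₂
  have : PerfectField k₁ := Algebra.IsAlgebraic.perfectField k
  have : PerfectField k₂ := Algebra.IsAlgebraic.perfectField k
  have : IsIntegrallyClosedIn k₁ (FractionRing A) :=
    .of_isIntegralClosure_of_isIntegrallyClosedIn k₁ k₁ A _
  have : IsIntegrallyClosedIn k₂ (FractionRing B) :=
    .of_isIntegralClosure_of_isIntegrallyClosedIn k₂ k₂ B _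
  have : IsIntegrallyClosedIn k₁ (A ⧸ mA) := isIntegrallyClosedIn_quotient
  have : IsIntegrallyClosedIn k₂ (B ⧸ mB) := isIntegrallyClosedIn_quotient
  refine noZeroDivisorsAlong_tensorIdeal_of_isIntegrallyClosedIn (k₁ := k₁) (k₂ := k₂) (Ω := Ω)
    hA hB ?_
  let := hk.toField
  exact (Algebra.TensorProduct.productMap (IsScalarTower.toAlgHom k k₁ Ω)
    (IsScalarTower.toAlgHom k k₂ Ω)).toRingHom.injective

theorem noZeroDivisorsAlong_tensorIdeal_of_connectedSpace [PerfectField k]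
    [IsDomain A] [IsDomain B] [IsIntegrallyClosed A] [IsIntegrallyClosed B]
    {mA : Ideal A} {mB : Ideal B} [mA.IsMaximal] [mB.IsMaximal]
    [IsAdicComplete mA A] [IsAdicComplete mB B] (hA : mA.FG) (hB : mB.FG)
    [ConnectedSpace (PrimeSpectrum ((A ⧸ mA) ⊗[k] (B ⧸ mB)))] :
    NoZeroDivisorsAlong fun n ↦ tensorIdeal k (mA ^ n) (mB ^ n) := by
  let := (isField_of_isIntegral_of_isField' (S := integralClosure k A) (Field.toIsField k)).toField
  let := (isField_of_isIntegral_of_isField' (S := integralClosure k B) (Field.toIsField k)).toField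
  refine noZeroDivisorsAlong_tensorIdeal_of_isField (k₁ := integralClosure k A)
    (k₂ := integralClosure k B) hA hB ?_
  exact isField_tensorProduct_of_connectedSpace (KA := A ⧸ mA) (KB := B ⧸ mB)

end CompletedTensor

theorem isDomain_completedTensor_iff_connected_general (k A B : Type*) [Field k] [PerfectField k]
    [CommRing A] [CommRing B] [IsNoetherianRing A] [IsNoetherianRing B]
    [IsLocalRing A] [IsLocalRing B]
    [IsAdicComplete (IsLocalRing.maximalIdeal A) A]
    [IsAdicComplete (IsLocalRing.maximalIdeal B) B]
    [Algebra k A] [Algebra k B]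
    [IsDomain A] [IsDomain B] [IsIntegrallyClosed A] [IsIntegrallyClosed B] :
    IsDomain (CompletedTensor k A B) ↔
      ConnectedSpace (PrimeSpectrum
        ((A ⧸ IsLocalRing.maximalIdeal A) ⊗[k] (B ⧸ IsLocalRing.maximalIdeal B))) := by
  have hA : (IsLocalRing.maximalIdeal A).FG := IsNoetherian.noetherian _
  have hB : (IsLocalRing.maximalIdeal B).FG := IsNoetherian.noetherian _
  unfold CompletedTensor
  rw [tensorRadical_eq_tensorIdeal]
  refine ⟨fun _ ↦ connectedSpace_primeSpectrum_tensorProduct_quotient hA hB, fun _ ↦ ?_⟩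
  exact isDomain_adicCompletion_of_noZeroDivisorsAlong
    (tensorIdeal_ne_top Ideal.IsPrime.ne_top' Ideal.IsPrime.ne_top')
    (noZeroDivisorsAlong_tensorIdeal_of_connectedSpace hA hB) (tensorIdeal_pow_le _ _)
    (pow_add_self_le_tensorIdeal_pow _ _)

/-- **Statement 17.** Let `k` be a perfect field, `A` and `B` two complete Noetherian
local commutative rings containing `k`, with maximal ideals `m` and `n`, such that
`A ⊗̂[k] B` is Noetherian. If `A` and `B` are integrally closed domains, then
`A ⊗̂[k] B` is a domain if and only if `Spec ((A ⧸ m) ⊗[k] (B ⧸ n))` is connected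
(equivalently, `(A ⧸ m) ⊗[k] (B ⧸ n)` has no idempotents other than `0` and `1`). -/
theorem isDomain_completedTensor_iff_connected (k A B : Type*) [Field k] [PerfectField k]
    [CommRing A] [CommRing B] [IsNoetherianRing A] [IsNoetherianRing B]
    [IsLocalRing A] [IsLocalRing B]
    [IsAdicComplete (IsLocalRing.maximalIdeal A) A]
    [IsAdicComplete (IsLocalRing.maximalIdeal B) B]
    [Algebra k A] [Algebra k B]
    [IsDomain A] [IsDomain B] [IsIntegrallyClosed A] [IsIntegrallyClosed B]
    (hE : IsNoetherianRing (CompletedTensor k A B)) :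
    IsDomain (CompletedTensor k A B) ↔
      ConnectedSpace (PrimeSpectrum
        ((A ⧸ IsLocalRing.maximalIdeal A) ⊗[k] (B ⧸ IsLocalRing.maximalIdeal B))) := by
  exact isDomain_completedTensor_iff_connected_general k A B
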